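/- Let $K$ be an algebraically closed field and let $\Gamma$ be a finite tree with a cyclic ordering of the edges incident to each vertex (a Brauer tree of multiplicity one). Its Brauer quiver $Q$ has the edges of $\Gamma$ as vertices and, for every vertex $p$ of $\Gamma$ and every edge $i$ incident to $p$, an arrow from $i$ to the edge that follows $i$ in the cyclic order around $p$ (a loop if $i$ is the only edge at $p$); thus $Q$ is a union of oriented cycles, one for each vertex of $\Gamma$, and each vertex of $Q$ lies on exactly two of them. Let $A$ be the basic Brauer tree algebra of $\Gamma$, i.e. the quotient of the path algebra $KQ$ (where $ab$ means first $a$, then $b$) by the relations: $ab=0$ whenever the arrows $a,b$ are composable and lie on different cycles, and, for each vertex $x$ of $Q$, the two full cycles starting at $x$ are equal. Modules are left modules, and $Ae_x$ is the indecomposable projective module corresponding to the vertex $x$ of $Q$. An $A$-cycle is a maximal ordered set of nonrepeating arrows of $Q$ such that the product of any two neighboring arrows is nonzero in $A$. Let $M$ be an indecomposable non-projective $A$-module and let $T=(P_0\xrightarrow{f}P_1)$, with $P_0$ in degree $0$ and $P_1$ in degree $1$, be a minimal projective presentation of $M$ (so $M\cong\operatorname{coker} f$). Assume that $T$ is an indecomposable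 partial tilting complex, i.e. $T$ is indecomposable in $D^b(A)$ and $\operatorname{Hom}_{D^b(A)}(T,T[k])=0$ for all $k\neq 0$. Write $P_0=\bigoplus_{i\in I}Ae_i$ and $P_1=\bigoplus_{j\in J}Ae_j$. The diagram of $T$ consists of the vertices of $Q$ corresponding to $I$ (sources) and to $J$ (sinks), together with all arrows and vertices on the path of $Q$ from $i$ to $j$ that is nonzero in $A$, for all $i\in I$, $j\in J$ such that $f$ has a nonzero component $Ae_i\to Ae_j$. A degree-one source (sink) of $T$ is a source (sink) to which exactly one arrow of the diagram is incident, i.e. which is an end point of the diagram. A vertex belongs to $T$ if it belongs to the diagram of $T$. Let $P$ be the stalk complex, concentrated in degree $1$, of the indecomposable projective $A$-module corresponding to a vertex $x$ of $Q$. Then $\operatorname{Hom}_{D^b(A)}(T,P[1])=0$ if and only if one of the following holds: (1) $x$ is a degree-one sink of $T$; (2) $x$ does not belong to $T$, and there is no $A$-cycle containing both $x$ and a degree-one source of $T$ such that this source is the only vertex of $T$ belonging to that $A$-cycle. -/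

import Mathlib

open CategoryTheory CategoryTheory.Limits

universe w v u

/-- A Brauer tree of multiplicity one on the (finite) set of vertices `V`: a tree together with a
cyclic ordering of the edges incident to each vertex. An edge `i` incident to a vertex `p` is the
dart `d` with `d.edge = i` and `d.fst = p`; the cyclic orderings are given by the permutation `next`
of the darts, whose cycles are exactly the sets of darts starting at a common vertex. -/
structure BrauerTree (V : Type v) where
  graph : SimpleGraph V
  isTree : graph.IsTree
  next : Equiv.Perm graph.Dart
  fst_next : ∀ d : graph.Dart, (next d).fst = d.fst
  sameCycle : ∀ d d' : graph.Dart, d.fst = d'.fst → next.SameCycle d d'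

namespace BrauerTree

variable {V : Type v} (B : BrauerTree V)

/-- The vertices of the Brauer quiver are the edges of the tree. -/
abbrev Vertex : Type v := B.graph.edgeSet

/-- The arrows of the Brauer quiver: a dart `d` stands for the arrow from the edge of `d` to the
edge that follows it in the cyclic order around the vertex `d.fst`. For a vertex of the tree with
only one edge this arrow is a loop, so every vertex of the quiver lies on exactly two cycles. -/
abbrev Arrow : Type v := B.graph.Dart

/-- The vertex of the quiver at which an arrow starts. -/
def source (d : B.Arrow) : B.Vertex := ⟨d.edge, d.edge_mem⟩

/-- The vertex of the quiver at which an arrow ends. -/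
def target (d : B.Arrow) : B.Vertex := B.source (B.next d)

/-- The cycle of the quiver around the vertex `d.fst` of the tree, written as the list of its
arrows starting with `d`; its length is the number of edges incident to `d.fst`. -/
noncomputable def cycleFrom (d : B.Arrow) : List B.Arrow :=
  List.iterate B.next d (Function.minimalPeriod B.next d)

variable (K : Type u) [Field K]

/-- The free algebra on the symbols `e_x` (for the vertices of the quiver) and on the arrows. -/
abbrev Free : Type (max u v) := FreeAlgebra K (B.Vertex ⊕ B.Arrow)

/-- The symbol `e_x` in the free algebra. -/
def freeE (x : B.Vertex) : B.Free K := FreeAlgebra.ι K (Sum.inl x)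

/-- An arrow in the free algebra. -/
def freeArr (d : B.Arrow) : B.Free K := FreeAlgebra.ι K (Sum.inr d)

/-- The defining relations. The first five are those of the path algebra of the Brauer quiver
(the product `ab` means: first `a`, then `b`), the last two are the Brauer tree relations
`αβ = 0 = βα` and `α ^ x_α = β ^ x_β` with multiplicity one. The two cycles through the vertex
`B.source d` are those starting with the arrows `d` and `d.symm`. -/
inductive Rel : B.Free K → B.Free K → Prop
  | idem (x : B.Vertex) : Rel (B.freeE K x * B.freeE K x) (B.freeE K x)
  | orth (x y : B.Vertex) : x ≠ y → Rel (B.freeE K x * B.freeE K y) 0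
  | one : Rel (∑ᶠ x : B.Vertex, B.freeE K x) 1
  | left (d : B.Arrow) : Rel (B.freeE K (B.source d) * B.freeArr K d) (B.freeArr K d)
  | right (d : B.Arrow) : Rel (B.freeArr K d * B.freeE K (B.target d)) (B.freeArr K d)
  | zero (d d' : B.Arrow) : B.target d = B.source d' → d' ≠ B.next d →
      Rel (B.freeArr K d * B.freeArr K d') 0
  | cycle (d : B.Arrow) :
      Rel ((B.cycleFrom d).map (B.freeArr K)).prod ((B.cycleFrom d.symm).map (B.freeArr K)).prod

/-- The basic Brauer tree algebra of a Brauer tree with multiplicity one. -/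
def Alg : Type (max u v) := RingQuot (B.Rel K)

noncomputable instance instRing : Ring (B.Alg K) := inferInstanceAs (Ring (RingQuot (B.Rel K)))

noncomputable instance instAlgebra : Algebra K (B.Alg K) := inferInstanceAs (Algebra K (RingQuot (B.Rel K)))

/-- The idempotent of `A` belonging to a vertex of the quiver. -/
noncomputable def e (x : B.Vertex) : B.Alg K := RingQuot.mkAlgHom K (B.Rel K) (B.freeE K x)

/-- The element of `A` given by an arrow. -/
noncomputable def arr (d : B.Arrow) : B.Alg K := RingQuot.mkAlgHom K (B.Rel K) (B.freeArr K d)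

/-- The indecomposable projective left module `A e_x`. -/
noncomputable abbrev proj (x : B.Vertex) : Submodule (B.Alg K) (B.Alg K) := Submodule.span (B.Alg K) {B.e K x}

/-- The list `l` of arrows is a path of the quiver from `x` to `y`. -/
def IsPath : B.Vertex → List B.Arrow → B.Vertex → Prop
  | x, [], y => x = y
  | x, d :: l, y => B.source d = x ∧ IsPath (B.target d) l y

/-- A nonempty ordered set of nonrepeating arrows in which the product of any two neighboring arrows
is nonzero in `A`. -/
def IsNonzeroChain (l : List B.Arrow) : Prop :=
  l ≠ [] ∧ l.Nodup ∧ l.IsChain (fun a b => B.arr K a * B.arr K b ≠ 0)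

/-- An `A`-cycle: a maximal ordered set of nonrepeating arrows such that the product of any two
neighboring arrows is nonzero. -/
def IsACycle (l : List B.Arrow) : Prop :=
  B.IsNonzeroChain K l ∧ ∀ l', B.IsNonzeroChain K l' → l <:+: l' → l' = l

/-- The vertex `x` of the quiver belongs to the given ordered set of arrows. -/
def OnCycle (x : B.Vertex) (l : List B.Arrow) : Prop :=
  ∃ d ∈ l, B.source d = x ∨ B.target d = x

/-- Cochain complexes of left `A`-modules. -/
abbrev Cplx := CochainComplex (ModuleCat.{max u v} (B.Alg K)) ℤ

section Complexes

variable {B K}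

/-- A submodule `N` of `P` is superfluous if `N + L = P` implies `L = P`. -/
def Superfluous {R P : Type*} [Ring R] [AddCommGroup P] [Module R P] (N : Submodule R P) : Prop :=
  ∀ L : Submodule R P, N ⊔ L = ⊤ → L = ⊤

/-- `T` is a minimal projective presentation `T⁰ ⟶ T¹` of `M`, placed in degrees `0` and `1`:
there is an exact sequence `T⁰ ⟶ T¹ ⟶ M ⟶ 0` in which `T¹ ⟶ M`, and `T⁰` onto its image in `T¹`,
are projective covers. -/
structure IsMinimalPresentation (T : B.Cplx K) (M : ModuleCat.{max u v} (B.Alg K)) : Prop where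
  strictlyGE : T.IsStrictlyGE 0
  strictlyLE : T.IsStrictlyLE 1
  finite₀ : Module.Finite (B.Alg K) (T.X 0)
  finite₁ : Module.Finite (B.Alg K) (T.X 1)
  projective₀ : Module.Projective (B.Alg K) (T.X 0)
  projective₁ : Module.Projective (B.Alg K) (T.X 1)
  exists_cover : ∃ p : T.X 1 →ₗ[B.Alg K] M, Function.Surjective p ∧
    LinearMap.range (T.d 0 1).hom = LinearMap.ker p ∧ Superfluous (LinearMap.ker p)
  superfluous_ker : Superfluous (LinearMap.ker (T.d 0 1).hom)

/-- `P` is the stalk complex, concentrated in degree `n`, of the indecomposable projective module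
corresponding to the vertex `x` of the quiver. -/
def IsStalk (P : B.Cplx K) (n : ℤ) (x : B.Vertex) : Prop :=
  Nonempty (P ≅ (CochainComplex.singleFunctor (ModuleCat.{max u v} (B.Alg K)) n).obj
    (ModuleCat.of (B.Alg K) (B.proj K x)))

/-- `Hom(S, T[k]) = 0` in the derived category. The bounded derived category of finitely generated
modules is a full subcategory of the derived category of all modules. -/
def HomVanishes [HasDerivedCategory.{w} (ModuleCat.{max u v} (B.Alg K))]
    (S T : B.Cplx K) (k : ℤ) : Prop :=
  ∀ g : DerivedCategory.Q.obj S ⟶ (DerivedCategory.Q.obj T)⟦k⟧, g = 0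

/-- `T` is indecomposable (in the derived category) and `Hom(T, T[k]) = 0` for all `k ≠ 0`. -/
def IsIndecPartialTilting [HasDerivedCategory.{w} (ModuleCat.{max u v} (B.Alg K))]
    (T : B.Cplx K) : Prop :=
  Indecomposable (DerivedCategory.Q.obj T) ∧ ∀ k : ℤ, k ≠ 0 → HomVanishes.{w} T T k

/-- Decompositions of `T⁰` and `T¹` as finite direct sums of modules `A e_x`. -/
structure Decomposition (T : B.Cplx K) where
  I : Type
  J : Type
  fintypeI : Fintype I
  fintypeJ : Fintype J
  src : I → B.Vertex
  snk : J → B.Vertex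
  iso₀ : T.X 0 ≃ₗ[B.Alg K] (∀ i, B.proj K (src i))
  iso₁ : T.X 1 ≃ₗ[B.Alg K] (∀ j, B.proj K (snk j))

namespace Decomposition

variable {T : B.Cplx K} (D : Decomposition T)

open Classical in
/-- The component `A e_i ⟶ A e_j` of the differential of `T`. -/
noncomputable def component (i : D.I) (j : D.J) :
    B.proj K (D.src i) →ₗ[B.Alg K] B.proj K (D.snk j) :=
  LinearMap.proj j ∘ₗ D.iso₁.toLinearMap ∘ₗ (T.d 0 1).hom ∘ₗ D.iso₀.symm.toLinearMap ∘ₗ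
    LinearMap.single (B.Alg K) (fun i => B.proj K (D.src i)) i

/-- The arrow `d` belongs to the diagram of `T`: it lies on the path (the one that is nonzero in
`A`) from some `i` to some `j` for which the differential has a nonzero component. -/
def HasArrow (d : B.Arrow) : Prop :=
  ∃ i j, D.component i j ≠ 0 ∧ ∃ l : List B.Arrow,
    B.IsPath (D.src i) l (D.snk j) ∧ (l.map (B.arr K)).prod ≠ 0 ∧ d ∈ l

/-- The vertex `x` belongs to the diagram of `T`. -/
def HasVertex (x : B.Vertex) : Prop :=
  (∃ i, D.src i = x) ∨ (∃ j, D.snk j = x) ∨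
    ∃ d, D.HasArrow d ∧ (B.source d = x ∨ B.target d = x)

/-- `x` is an end point of the diagram: exactly one arrow of the diagram is incident to it. -/
def IsEndPoint (x : B.Vertex) : Prop :=
  ∃! d, D.HasArrow d ∧ (B.source d = x ∨ B.target d = x)

/-- `x` is a degree-one source of the diagram. -/
def IsDegOneSource (x : B.Vertex) : Prop := (∃ i, D.src i = x) ∧ D.IsEndPoint x

/-- `x` is a degree-one sink of the diagram. -/
def IsDegOneSink (x : B.Vertex) : Prop := (∃ j, D.snk j = x) ∧ D.IsEndPoint x

end Decomposition

end Complexes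

end BrauerTree

/-!
`Hom(T, P[1])` vanishes exactly when every map `T⁰ ⟶ A e_x` factors through the differential `f` of
`T`, and `Hom(T, T[1]) = 0` says that `f` is rigid: every map `T⁰ ⟶ T¹` has the form `f h + h' f`.
Minimality and rigidity force the sources and the sinks to be disjoint. A stable matching of sources
and sinks around each vertex of the tree, in which ties are broken by weights of opposite sign at
the two ends of an edge, yields an explicit rigid map with the same source and target. Over an
infinite field two rigid maps between the same projective modules are isomorphic, since both have an
open orbit; hence `f` is the matching map up to isomorphism. Indecomposability makes the matching
connected, so it is a zigzag along a self-avoiding path of the tree, for which the factorization of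
maps into `A e_x` through `f` can be read off from the positions of the sources and sinks.
-/

section HomologicalAlgebra

open CochainComplex.HomComplex

variable {C : Type u} [Category.{v} C] [Abelian C]

lemma derivedCategory_hom_vanishes_iff [HasDerivedCategory.{w} C] (S L : CochainComplex C ℤ)
    [S.IsKProjective] (k : ℤ) :
    (∀ g : DerivedCategory.Q.obj S ⟶ (DerivedCategory.Q.obj L)⟦k⟧, g = 0) ↔
      ∀ z : Cocycle S L k, z ∈ coboundaries S L k := by
  let e : (DerivedCategory.Q.obj S ⟶ (DerivedCategory.Q.obj L)⟦k⟧) ≃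
      (DerivedCategory.Qh.obj ((HomotopyCategory.quotient _ _).obj S) ⟶
        DerivedCategory.Qh.obj ((HomotopyCategory.quotient _ _).obj (L⟦k⟧))) :=
    Iso.homCongr ((DerivedCategory.quotientCompQhIso C).symm.app S)
      ((DerivedCategory.Q.commShiftIso k).symm.app L ≪≫
        (DerivedCategory.quotientCompQhIso C).symm.app (L⟦k⟧))
  have e_zero : e 0 = 0 := by simp [e]
  have hQh := CochainComplex.IsKProjective.Qh_map_bijective S
    ((HomotopyCategory.quotient _ _).obj (L⟦k⟧))
  simp_rw [← CohomologyClass.toHom_mk_eq_zero_iff]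
  constructor
  · intro h z
    apply hQh.injective
    rw [Functor.map_zero, ← e_zero,
      ← h (e.symm (DerivedCategory.Qh.map (CohomologyClass.toHom (CohomologyClass.mk z)))),
      Equiv.apply_symm_apply]
  · intro h g
    apply e.injective
    obtain ⟨y, hy⟩ := hQh.surjective (e g)
    obtain ⟨c, rfl⟩ := (CohomologyClass.toHom_bijective S L k).surjective y
    obtain ⟨z, rfl⟩ := c.mk_surjective
    rw [e_zero, ← hy, h, Functor.map_zero]

lemma forall_mem_coboundaries_one_iff (S L : CochainComplex C ℤ) [S.IsStrictlyGE 0]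
    [L.IsStrictlyLE 1] :
    (∀ z : Cocycle S L 1, z ∈ coboundaries S L 1) ↔
      ∀ φ : S.X 0 ⟶ L.X 1, ∃ (a : S.X 0 ⟶ L.X 0) (b : S.X 1 ⟶ L.X 1),
        φ = a ≫ L.d 0 1 + S.d 0 1 ≫ b := by
  have hom_eq (p q : ℤ) (hpq : p < 0 ∨ 1 < q) (g g' : S.X p ⟶ L.X q) : g = g' := by
    rcases hpq with h | h
    · exact (S.isZero_of_isStrictlyGE 0 p h).eq_of_src _ _
    · exact (L.isZero_of_isStrictlyLE 1 q h).eq_of_tgt _ _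
  simp_rw [mem_coboundaries_iff _ 0 (zero_add 1)]
  constructor
  · intro h φ
    let z : Cochain S L 1 := Cochain.mk fun p q hpq =>
      if hp : p = 0 then
        (S.XIsoOfEq hp).hom ≫ φ ≫ (L.XIsoOfEq (show 1 = q by lia)).hom else 0
    have hz : δ 1 2 z = 0 := by
      ext p q hpq
      exact hom_eq p q (by lia) _ _
    obtain ⟨β, hβ⟩ := h (Cocycle.mk z 2 rfl hz)
    refine ⟨β.v 0 0 (add_zero 0), - β.v 1 1 (add_zero 1), ?_⟩
    have hδ := δ_zero_cochain_v β 0 1 (zero_add 1)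
    rw [hβ] at hδ
    simp only [Cocycle.mk_coe, Cochain.mk_v, z] at hδ
    simpa [sub_eq_add_neg] using hδ
  · intro h z
    obtain ⟨a, b, hab⟩ := h ((z : Cochain S L 1).v 0 1 (zero_add 1))
    refine ⟨Cochain.mk fun p q hpq =>
      if hp : p = 0 then
        (S.XIsoOfEq hp).hom ≫ a ≫ (L.XIsoOfEq (show 0 = q by lia)).hom
      else if hp : p = 1 then
        (S.XIsoOfEq hp).hom ≫ (-b) ≫ (L.XIsoOfEq (show 1 = q by lia)).hom else 0, ?_⟩
    ext p q hpq
    by_cases hp : p = 0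
    · subst hp
      obtain rfl : q = 1 := by lia
      rw [δ_zero_cochain_v, hab]
      simp
    · exact hom_eq p q (by lia) _ _

end HomologicalAlgebra

section PolynomialFamilies

variable {K : Type*} [Field K]

/-- A family of vectors which depends polynomially on a parameter: all its coordinates are
polynomials. -/
def IsPolynomialFamily {W : Type*} [AddCommGroup W] [Module K W] (g : K → W) : Prop :=
  ∀ φ : W →ₗ[K] K, ∃ p : Polynomial K, ∀ s, φ (g s) = p.eval s

namespace IsPolynomialFamily

variable {W W' : Type*} [AddCommGroup W] [Module K W] [AddCommGroup W'] [Module K W']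

lemma map {g : K → W} (hg : IsPolynomialFamily g) (f : W →ₗ[K] W') :
    IsPolynomialFamily fun s => f (g s) := fun φ => hg (φ ∘ₗ f)

lemma const (w : W) : IsPolynomialFamily fun _ : K => w := fun φ =>
  ⟨Polynomial.C (φ w), fun s => by simp⟩

lemma add {g g' : K → W} (hg : IsPolynomialFamily g) (hg' : IsPolynomialFamily g') :
    IsPolynomialFamily fun s => g s + g' s := fun φ => by
  obtain ⟨p, hp⟩ := hg φ
  obtain ⟨q, hq⟩ := hg' φ
  exact ⟨p + q, fun s => by simp [hp, hq]⟩

lemma eval_smul {g : K → W} (hg : IsPolynomialFamily g) (q : Polynomial K) :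
    IsPolynomialFamily fun s => q.eval s • g s := fun φ => by
  obtain ⟨p, hp⟩ := hg φ
  exact ⟨q * p, fun s => by simp [hp]⟩

lemma smul {g : K → W} (hg : IsPolynomialFamily g) : IsPolynomialFamily fun s => s • g s := by
  simpa using hg.eval_smul Polynomial.X

lemma sum {ι : Type*} [Fintype ι] {g : ι → K → W} (hg : ∀ i, IsPolynomialFamily (g i)) :
    IsPolynomialFamily fun s => ∑ i, g i s := fun φ => by
  choose p hp using fun i => hg i φ
  exact ⟨∑ i, p i, fun s => by simp [hp, Polynomial.eval_finsetSum]⟩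

section Matrix

variable {n : Type*} [Fintype n] [DecidableEq n] (b : Module.Basis n K W)

lemma exists_toMatrix_eq {g : K → Module.End K W} (hg : IsPolynomialFamily g) :
    ∃ M : Matrix n n (Polynomial K), ∀ s,
      LinearMap.toMatrix b b (g s) = (Polynomial.evalRingHom s).mapMatrix M := by
  choose p hp using fun i j =>
    hg (Matrix.entryLinearMap K K i j ∘ₗ (LinearMap.toMatrix b b).toLinearMap)
  refine ⟨Matrix.of p, fun s => ?_⟩
  ext i j
  simpa using hp i j s

lemma toLin_mapMatrix (M : Matrix n n (Polynomial K)) :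
    IsPolynomialFamily fun s => Matrix.toLin b b ((Polynomial.evalRingHom s).mapMatrix M) := by
  have h (s : K) : (Polynomial.evalRingHom s).mapMatrix M =
      ∑ i, ∑ j, (M i j).eval s • Matrix.single i j (1 : K) := by
    conv_lhs => rw [Matrix.matrix_eq_sum_single ((Polynomial.evalRingHom s).mapMatrix M)]
    simp [Matrix.smul_single]
  simp only [h, map_sum, map_smul]
  exact sum fun i => sum fun j => (const _).eval_smul _

end Matrix

variable [Module.Finite K W] {g : K → Module.End K W}

lemma exists_det_eq (hg : IsPolynomialFamily g) :
    ∃ p : Polynomial K, ∀ s, LinearMap.det (g s) = p.eval s := by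
  classical
  obtain ⟨M, hM⟩ := hg.exists_toMatrix_eq (Module.finBasis K W)
  refine ⟨M.det, fun s => ?_⟩
  rw [← LinearMap.det_toMatrix (Module.finBasis K W), hM, ← RingHom.map_det]
  rfl

lemma exists_adjugate (hg : IsPolynomialFamily g) :
    ∃ h : K → Module.End K W, IsPolynomialFamily h ∧
      ∀ s, g s * h s = LinearMap.det (g s) • 1 := by
  classical
  let b := Module.finBasis K W
  obtain ⟨M, hM⟩ := hg.exists_toMatrix_eq b
  refine ⟨_, toLin_mapMatrix b M.adjugate, fun s => ?_⟩
  apply (LinearMap.toMatrix b b).injective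
  rw [LinearMap.toMatrix_mul, LinearMap.toMatrix_toLin, ← LinearMap.det_toMatrix b, hM,
    RingHom.map_adjugate, Matrix.mul_adjugate, map_smul, LinearMap.toMatrix_one]

lemma finite_not_isUnit (hg : IsPolynomialFamily g) {s₀ : K} (h₀ : IsUnit (g s₀)) :
    {s | ¬ IsUnit (g s)}.Finite := by
  obtain ⟨p, hp⟩ := hg.exists_det_eq
  simp only [LinearMap.isUnit_iff_isUnit_det, hp, isUnit_iff_ne_zero, not_not] at h₀ ⊢
  have hp0 : p ≠ 0 := by
    rintro rfl
    simp at h₀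
  exact Polynomial.finite_setOfPred_isRoot hp0

end IsPolynomialFamily

/-- The solution is found by Cramer's rule, applied to the endomorphism `1 + s L₁ R` of the target
for a linear section `R` of `L₀`. -/
lemma exists_isPolynomialFamily_ker {W U : Type*} [AddCommGroup W] [Module K W] [AddCommGroup U]
    [Module K U] [Module.Finite K U] {L₀ : W →ₗ[K] U} (hL₀ : Function.Surjective L₀)
    (L₁ : W →ₗ[K] U) {w₀ : W} (hw₀ : L₀ w₀ = 0) :
    ∃ g : K → W, IsPolynomialFamily g ∧ g 0 = w₀ ∧ ∀ s, L₀ (g s) + s • L₁ (g s) = 0 := by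
  obtain ⟨R, hR⟩ := L₀.exists_rightInverse_of_surjective (LinearMap.range_eq_top.2 hL₀)
  have hC : IsPolynomialFamily fun s : K => (1 : Module.End K U) + s • (L₁ ∘ₗ R) :=
    (IsPolynomialFamily.const _).add (IsPolynomialFamily.const _).smul
  obtain ⟨q, hq⟩ := hC.exists_det_eq
  obtain ⟨h, hh, hCh⟩ := hC.exists_adjugate
  have hy (s : K) : h s (L₁ w₀) + s • L₁ (R (h s (L₁ w₀))) = q.eval s • L₁ w₀ := by
    simpa [hq] using LinearMap.congr_fun (hCh s) (L₁ w₀)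
  refine ⟨fun s => q.eval s • w₀ + s • R (-h s (L₁ w₀)),
    ((IsPolynomialFamily.const _).eval_smul q).add
      (hh.map (R ∘ₗ (-LinearMap.applyₗ (L₁ w₀)))).smul, by simp [← hq], fun s => ?_⟩
  have hLR : L₀ (R (h s (L₁ w₀))) = h s (L₁ w₀) := LinearMap.congr_fun hR _
  simp only [map_add, map_smul, map_neg, hw₀, hLR, ← hy]
  module

end PolynomialFamilies

section Rigid

variable {K A : Type*} [Field K] [Ring A] [Algebra K A]
variable {P Q : Type*} [AddCommGroup P] [Module A P] [AddCommGroup Q] [Module A Q]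

/-- A homomorphism `f`, regarded as a complex `P ⟶ Q`, is rigid if every map of degree one from
this complex to itself is homotopic to zero. -/
def IsRigid (f : P →ₗ[A] Q) : Prop :=
  ∀ φ : P →ₗ[A] Q, ∃ (h : P →ₗ[A] P) (h' : Q →ₗ[A] Q), φ = f ∘ₗ h + h' ∘ₗ f

variable [Module K P] [IsScalarTower K A P] [Module K Q] [IsScalarTower K A Q]
  [Module.Finite K P] [Module.Finite K Q]

variable (K) in
/-- The orbit of a rigid homomorphism is open: surjectivity of the tangent map of the orbit map
deforms the identity to pairs `(u, v)` with `v ∘ (f + s z) = f ∘ u`, polynomially in `s`. -/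
lemma IsRigid.finite_not_equiv {f : P →ₗ[A] Q} (hf : IsRigid f) (z : P →ₗ[A] Q) :
    {s : K | ¬ ∃ (u : P ≃ₗ[A] P) (v : Q ≃ₗ[A] Q),
      v.toLinearMap ∘ₗ (f + s • z) = f ∘ₗ u.toLinearMap}.Finite := by
  let L₀ : Module.End A P × Module.End A Q →ₗ[K] (P →ₗ[A] Q) :=
    { toFun := fun l => l.2 ∘ₗ f - f ∘ₗ l.1
      map_add' := fun l l' => by ext; simp; abel
      map_smul' := fun r l => by ext; simp [smul_sub] }
  let L₁ : Module.End A P × Module.End A Q →ₗ[K] (P →ₗ[A] Q) :=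
    { toFun := fun l => l.2 ∘ₗ z
      map_add' := fun l l' => rfl
      map_smul' := fun r l => rfl }
  have hL₀ : Function.Surjective L₀ := fun φ => by
    obtain ⟨h, h', rfl⟩ := hf φ
    exact ⟨(-h, h'), by ext; simp [L₀, add_comm]⟩
  have : Module.Finite K (P →ₗ[A] Q) :=
    Module.Finite.of_injective (LinearMap.restrictScalarsₗ K A P Q K)
      (LinearMap.restrictScalars_injective K)
  obtain ⟨l, hl, l_zero, hL⟩ := exists_isPolynomialFamily_ker hL₀ L₁ (w₀ := 1) (by ext; simp [L₀])
  have hP := ((hl.map (LinearMap.fst K _ _)).map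
    (LinearMap.restrictScalarsₗ K A P P K)).finite_not_isUnit (s₀ := 0)
      (by rw [l_zero]; exact isUnit_one)
  have hQ := ((hl.map (LinearMap.snd K _ _)).map
    (LinearMap.restrictScalarsₗ K A Q Q K)).finite_not_isUnit (s₀ := 0)
      (by rw [l_zero]; exact isUnit_one)
  refine (hP.union hQ).subset fun s hs => ?_
  by_contra hunit
  simp only [Set.mem_union, Set.mem_ofPred_eq, not_or, not_not, Module.End.isUnit_iff] at hunit
  refine hs ⟨LinearEquiv.ofBijective (l s).1 hunit.1, LinearEquiv.ofBijective (l s).2 hunit.2, ?_⟩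
  ext x
  change (l s).2 (f x + s • z x) = f ((l s).1 x)
  have hx : (l s).2 (f x) - f ((l s).1 x) + s • (l s).2 (z x) = 0 := LinearMap.congr_fun (hL s) x
  rw [map_add, LinearMap.map_smul_of_tower, ← sub_eq_zero, ← hx, sub_add_eq_add_sub]

variable (K) in
/-- Two open orbits meet the line through `f` and `g`. -/
lemma IsRigid.exists_equiv [Infinite K] {f g : P →ₗ[A] Q} (hf : IsRigid f) (hg : IsRigid g) :
    ∃ (u : P ≃ₗ[A] P) (v : Q ≃ₗ[A] Q), v.toLinearMap ∘ₗ f = g ∘ₗ u.toLinearMap := by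
  have hfin := (hf.finite_not_equiv K (g - f)).union
    ((hg.finite_not_equiv K (f - g)).preimage (f := fun s => 1 - s) sub_right_injective.injOn)
  obtain ⟨s, hs⟩ := hfin.infinite_compl.nonempty
  simp only [Set.mem_compl_iff, Set.mem_union, Set.mem_preimage, Set.mem_ofPred_eq, not_or,
    not_not] at hs
  obtain ⟨⟨u, v, hf⟩, u', v', hg⟩ := hs
  rw [show g + (1 - s) • (f - g) = f + s • (g - f) by module] at hg
  refine ⟨u.symm.trans u', v.symm.trans v', ?_⟩
  ext x
  have hfx := LinearMap.congr_fun hf (u.symm x)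
  have hgx := LinearMap.congr_fun hg (u.symm x)
  simp only [LinearMap.comp_apply, LinearEquiv.coe_coe, LinearEquiv.apply_symm_apply] at hfx hgx
  simp [← hgx, ← hfx]

end Rigid

section Indecomposable

open BrauerTree

variable {A : Type u} [Ring A]

lemma eq_bot_or_eq_bot_of_indecomposable {M : ModuleCat.{v} A} (hM : Indecomposable M)
    {N₁ N₂ : Submodule A M} (h : IsCompl N₁ N₂) : N₁ = ⊥ ∨ N₂ = ⊥ := by
  let e : M ≅ ModuleCat.of A N₁ ⊞ ModuleCat.of A N₂ :=
    (Submodule.prodEquivOfIsCompl N₁ N₂ h).symm.toModuleIso ≪≫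
      (ModuleCat.biprodIsoProd (ModuleCat.of A N₁) (ModuleCat.of A N₂)).symm
  have eq_bot (N : Submodule A M) (hN : IsZero (ModuleCat.of A N)) : N = ⊥ :=
    N.subsingleton_iff_eq_bot.1 (ModuleCat.subsingleton_of_isZero hN)
  exact (hM.2 _ _ e).imp (eq_bot _) (eq_bot _)

lemma eq_zero_or_eq_one_of_indecomposable {M : ModuleCat.{v} A} (hM : Indecomposable M)
    {c : Module.End A M} (hc : IsIdempotentElem c) : c = 0 ∨ c = 1 := by
  rcases eq_bot_or_eq_bot_of_indecomposable hM (LinearMap.IsIdempotentElem.isCompl hc) with h | h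
  · exact Or.inl (LinearMap.range_eq_bot.1 h)
  · rw [LinearMap.IsIdempotentElem.ker_eq_range_one_sub hc, LinearMap.range_eq_bot,
      sub_eq_zero] at h
    exact Or.inr h.symm

variable {P Q : Type*} [AddCommGroup P] [Module A P] [AddCommGroup Q] [Module A Q]

lemma BrauerTree.Superfluous.eq_zero_of_range_le {N : Submodule A P} (hN : Superfluous N)
    {a : Module.End A P} (ha : IsIdempotentElem a) (h : LinearMap.range a ≤ N) : a = 0 :=
  LinearMap.ker_eq_top.1 <| hN _ <| top_unique <|
    (LinearMap.IsIdempotentElem.isCompl ha).sup_eq_top ▸ sup_le_sup_right h _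

section IdempotentPairs

variable {f : P →ₗ[A] Q} {a : Module.End A P} {b : Module.End A Q}

lemma eq_zero_of_range_le_range (hrange : Superfluous (LinearMap.range f))
    (hker : Superfluous (LinearMap.ker f)) (ha : IsIdempotentElem a) (hb : IsIdempotentElem b)
    (hab : b ∘ₗ f = f ∘ₗ a) (h : LinearMap.range b ≤ LinearMap.range f) : a = 0 ∧ b = 0 := by
  obtain rfl := hrange.eq_zero_of_range_le hb h
  refine ⟨hker.eq_zero_of_range_le ha ?_, rfl⟩
  rw [LinearMap.range_le_ker_iff, ← hab, LinearMap.zero_comp]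

lemma eq_zero_or_eq_one_of_minimal_presentation {M : ModuleCat.{v} A} (hM : Indecomposable M)
    {π : Q →ₗ[A] M} (hπ : Function.Surjective π)
    (hfπ : LinearMap.range f = LinearMap.ker π) (hrange : Superfluous (LinearMap.range f))
    (hker : Superfluous (LinearMap.ker f)) (ha : IsIdempotentElem a) (hb : IsIdempotentElem b)
    (hab : b ∘ₗ f = f ∘ₗ a) : (a = 0 ∧ b = 0) ∨ (a = 1 ∧ b = 1) := by
  have hbπ : LinearMap.ker π ≤ LinearMap.ker (π ∘ₗ b) := by
    rw [← hfπ, LinearMap.range_le_ker_iff, LinearMap.comp_assoc, hab, ← LinearMap.comp_assoc,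
      LinearMap.range_le_ker_iff.1 hfπ.le, LinearMap.zero_comp]
  let c : Module.End A M :=
    (LinearMap.ker π).liftQ (π ∘ₗ b) hbπ ∘ₗ (π.quotKerEquivOfSurjective hπ).symm
  have hcπ (x : Q) : c (π x) = π (b x) := by
    rw [← LinearMap.quotKerEquivOfSurjective_apply_mk π hπ x]
    simp [c]
  have hc : IsIdempotentElem c := LinearMap.ext fun y => by
    obtain ⟨x, rfl⟩ := hπ y
    rw [Module.End.mul_apply, hcπ, hcπ, ← Module.End.mul_apply, hb.eq]
  rcases eq_zero_or_eq_one_of_indecomposable hM hc with h | h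
  · refine Or.inl (eq_zero_of_range_le_range hrange hker ha hb hab ?_)
    rw [hfπ, LinearMap.range_le_ker_iff]
    ext x
    simpa [h] using (hcπ x).symm
  · obtain ⟨ha', hb'⟩ := eq_zero_of_range_le_range hrange hker ha.one_sub hb.one_sub (by
      ext x
      simpa using LinearMap.congr_fun hab x) (by
      rw [hfπ, LinearMap.range_le_ker_iff]
      ext x
      simp [← hcπ, h])
    exact Or.inr ⟨(sub_eq_zero.1 ha').symm, (sub_eq_zero.1 hb').symm⟩

end IdempotentPairs

end Indecomposable

section Trees

open SimpleGraph

variable {V : Type*} {G : SimpleGraph V}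

lemma eq_of_dist_lt_of_isTree (hG : G.IsTree) {p q r v : V} (hp : G.Adj q p) (hr : G.Adj q r)
    (hvp : G.dist p v < G.dist q v) (hvr : G.dist r v < G.dist q v) : p = r := by
  have exists_path {p : V} (hp : G.Adj q p) (h : G.dist p v < G.dist q v) :
      ∃ w : G.Walk p v, (Walk.cons hp w).IsPath := by
    obtain ⟨w, hw⟩ := (hG.connected p v).exists_walk_length_eq_dist
    refine ⟨w, Walk.isPath_of_length_eq_dist _ ?_⟩
    have := dist_le (Walk.cons hp w)
    rw [Walk.length_cons] at this ⊢
    omega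
  obtain ⟨w, hw⟩ := exists_path hp hvp
  obtain ⟨w', hw'⟩ := exists_path hr hvr
  have h := congrArg Subtype.val ((hG.isAcyclic.subsingleton_path q v).elim ⟨_, hw⟩ ⟨_, hw'⟩)
  simpa using congrArg Walk.snd h

/-- The branch of a dart: the vertices which, in a tree, are reached through it. -/
def branch (d : G.Dart) : Set V := {v | G.dist d.snd v < G.dist d.fst v}

lemma snd_mem_branch (hG : G.IsTree) (d : G.Dart) : d.snd ∈ branch d := by
  rw [branch, Set.mem_ofPred_eq, dist_self]
  exact hG.connected.pos_dist_of_ne d.adj.ne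

lemma fst_notMem_branch (d : G.Dart) : d.fst ∉ branch d := by
  simp [branch]

lemma branch_subset (hG : G.IsTree) {d d' : G.Dart} (h : d'.fst = d.snd) (h' : d' ≠ d.symm) :
    branch d' ⊆ branch d := by
  intro v hv
  rw [branch, Set.mem_ofPred_eq] at hv ⊢
  by_contra! hle
  have hne : G.dist d.fst v ≠ G.dist d.snd v := by
    rw [dist_comm, dist_comm (u := d.snd)]
    exact hG.dist_ne_of_adj v d.adj
  have hadj : G.Adj d.snd d'.snd := h ▸ d'.adj
  have hfst := eq_of_dist_lt_of_isTree hG d.adj.symm hadj (lt_of_le_of_ne hle hne) (by rwa [← h])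
  exact h' (Dart.ext _ _ (Prod.ext h hfst.symm))

lemma ncard_branch_lt [Finite V] (hG : G.IsTree) {d d' : G.Dart} (h : d'.fst = d.snd)
    (h' : d' ≠ d.symm) : (branch d').ncard < (branch d).ncard :=
  Set.ncard_lt_ncard ((Set.ssubset_iff_of_subset (branch_subset hG h h')).2
    ⟨d.snd, snd_mem_branch hG d, h ▸ fst_notMem_branch d'⟩)

end Trees

section StableMatching

variable {I J O : Type*} [Finite I] [Finite J] [LinearOrder O]

/-- Repeatedly match a pair which is preferred to all remaining ones. -/
lemma exists_stable_matching (R : I → J → Prop) (l : I → J → O) :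
    ∃ m : I → J → Prop, (∀ i j, m i j → R i j) ∧ (∀ i j j', m i j → m i j' → j = j') ∧
      (∀ i i' j, m i j → m i' j → i = i') ∧
      ∀ i j, R i j → (∃ j', m i j' ∧ l i j' ≤ l i j) ∨ ∃ i', m i' j ∧ l i' j ≤ l i j := by
  induction hn : {x : I × J | R x.1 x.2}.ncard using Nat.strong_induction_on generalizing R with
  | _ n ih =>
  rcases Set.eq_empty_or_nonempty {x : I × J | R x.1 x.2} with h | h
  · refine ⟨fun _ _ => False, by simp, by simp, by simp, fun i j hij => ?_⟩
    exact absurd (show (i, j) ∈ {x : I × J | R x.1 x.2} from hij) (h ▸ Set.notMem_empty _)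
  obtain ⟨⟨i₀, j₀⟩, h₀, hmin⟩ := Set.exists_min_image _ (fun x => l x.1 x.2) (Set.toFinite _) h
  have hlt : {x : I × J | R x.1 x.2 ∧ x.1 ≠ i₀ ∧ x.2 ≠ j₀}.ncard < n := hn ▸
    Set.ncard_lt_ncard ((Set.ssubset_iff_of_subset fun x hx => hx.1).2
      ⟨(i₀, j₀), h₀, fun hx => hx.2.1 rfl⟩)
  obtain ⟨m, hmR, hmI, hmJ, hstable⟩ := ih _ hlt (fun i j => R i j ∧ i ≠ i₀ ∧ j ≠ j₀) rfl
  refine ⟨fun i j => m i j ∨ (i = i₀ ∧ j = j₀), ?_, ?_, ?_, fun i j hij => ?_⟩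
  · rintro i j (h | ⟨rfl, rfl⟩)
    exacts [(hmR i j h).1, h₀]
  · rintro i j j' (h | ⟨rfl, rfl⟩) (h' | ⟨hi, rfl⟩)
    exacts [hmI i j j' h h', absurd hi (hmR _ _ h).2.1, absurd rfl (hmR _ _ h').2.1, rfl]
  · rintro i i' j (h | ⟨rfl, rfl⟩) (h' | ⟨rfl, hj⟩)
    exacts [hmJ i i' j h h', absurd hj (hmR _ _ h).2.2, absurd rfl (hmR _ _ h').2.2, rfl]
  · by_cases hi : i = i₀
    · exact Or.inl ⟨j₀, Or.inr ⟨hi, rfl⟩, hi ▸ hmin (i, j) hij⟩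
    by_cases hj : j = j₀
    · exact Or.inr ⟨i₀, Or.inr ⟨rfl, hj⟩, hj ▸ hmin (i, j) hij⟩
    exact (hstable i j ⟨hij, hi, hj⟩).imp (fun ⟨j', h, h'⟩ => ⟨j', Or.inl h, h'⟩)
      fun ⟨i', h, h'⟩ => ⟨i', Or.inl h, h'⟩

end StableMatching

namespace BrauerTree

section Combinatorics

variable {V : Type v} (B : BrauerTree V)

instance finite_arrow [Finite V] : Finite B.Arrow :=
  Finite.of_injective (fun d : B.Arrow => d.toProd) fun _ _ h => SimpleGraph.Dart.ext _ _ h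

instance finite_vertex [Finite V] : Finite B.Vertex :=
  inferInstanceAs (Finite B.graph.edgeSet)

/-- The length of the cycle of the quiver through an arrow, that is, the degree of the vertex of
the tree around which it runs. -/
noncomputable abbrev deg (d : B.Arrow) : ℕ := Function.minimalPeriod B.next d

variable {B}

lemma source_symm (d : B.Arrow) : B.source d.symm = B.source d :=
  Subtype.ext (SimpleGraph.Dart.edge_symm d)

lemma symm_ne_self (d : B.Arrow) : d.symm ≠ d := SimpleGraph.Dart.symm_ne d

lemma source_eq_source {d d' : B.Arrow} : B.source d = B.source d' ↔ d = d' ∨ d = d'.symm := by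
  rw [source, source, Subtype.mk.injEq]
  exact SimpleGraph.dart_edge_eq_iff d d'

lemma fst_symm_ne (d : B.Arrow) : d.symm.fst ≠ d.fst := d.adj.ne'

lemma eq_of_source_eq_of_fst_eq {d d' : B.Arrow} (h : B.source d = B.source d')
    (h' : d.fst = d'.fst) : d = d' := by
  rcases source_eq_source.1 h with h | rfl
  · exact h
  · exact absurd h' (fst_symm_ne d')

lemma mem_source_iff {d : B.Arrow} {p : V} : p ∈ (B.source d).1 ↔ p = d.fst ∨ p = d.snd :=
  Sym2.mem_iff

lemma fst_mem_source (d : B.Arrow) : d.fst ∈ (B.source d).1 := mem_source_iff.2 (Or.inl rfl)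

lemma eq_of_mem_of_mem {x y : B.Vertex} (hxy : x ≠ y) {p q : V} (hpx : p ∈ x.1) (hpy : p ∈ y.1)
    (hqx : q ∈ x.1) (hqy : q ∈ y.1) : p = q := by
  by_contra h
  exact hxy (Subtype.ext (((Sym2.mem_and_mem_iff h).1 ⟨hpx, hqx⟩).trans
    ((Sym2.mem_and_mem_iff h).1 ⟨hpy, hqy⟩).symm))

lemma exists_source_eq_fst_eq {x : B.Vertex} {p : V} (hp : p ∈ x.1) :
    ∃ d : B.Arrow, B.source d = x ∧ d.fst = p := by
  obtain ⟨q, hq⟩ := Sym2.mem_iff_exists.1 hp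
  exact ⟨⟨(p, q), B.graph.mem_edgeSet.1 (hq ▸ x.2)⟩, Subtype.ext hq.symm, rfl⟩

lemma fst_iterate_next (k : ℕ) (d : B.Arrow) : (B.next^[k] d).fst = d.fst := by
  induction k generalizing d with
  | zero => rfl
  | succ k ih => rw [Function.iterate_succ_apply, ih, B.fst_next]

lemma deg_iterate_next (k : ℕ) (d : B.Arrow) (hd : 0 < B.deg d) :
    B.deg (B.next^[k] d) = B.deg d :=
  Function.minimalPeriod_apply_iterate (Function.minimalPeriod_pos_iff_mem_periodicPts.1 hd) k

lemma iterate_deg (d : B.Arrow) : B.next^[B.deg d] d = d := Function.iterate_minimalPeriod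

variable [Finite V]

lemma deg_pos (d : B.Arrow) : 0 < B.deg d :=
  Function.minimalPeriod_pos_of_mem_periodicPts (B.next.injective.mem_periodicPts d)

lemma deg_iterate (k : ℕ) (d : B.Arrow) : B.deg (B.next^[k] d) = B.deg d :=
  deg_iterate_next k d (deg_pos d)

lemma exists_iterate_eq {a b : B.Arrow} (h : a.fst = b.fst) : ∃ k : ℕ, B.next^[k] a = b := by
  classical
  have := Fintype.ofFinite B.Arrow
  obtain ⟨k, -, -, hk⟩ := (B.sameCycle a b h).exists_pow_eq B.next
  exact ⟨k, by rw [← Equiv.Perm.iterate_eq_pow] at hk; exact hk⟩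

/-- The number of steps from an arrow to another arrow on the same cycle. -/
noncomputable def steps (a b : B.Arrow) : ℕ := sInf {k | B.next^[k] a = b}

lemma iterate_steps {a b : B.Arrow} (h : a.fst = b.fst) : B.next^[steps a b] a = b :=
  Nat.sInf_mem (s := {k | B.next^[k] a = b}) (exists_iterate_eq h)

lemma steps_lt {a b : B.Arrow} (h : a.fst = b.fst) : steps a b < B.deg a := by
  obtain ⟨k, hk⟩ := exists_iterate_eq h
  refine lt_of_le_of_lt (Nat.sInf_le (m := k % B.deg a) ?_) (Nat.mod_lt _ (deg_pos a))
  rwa [Set.mem_ofPred_eq, Function.iterate_mod_minimalPeriod_eq]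

lemma eq_steps {a b : B.Arrow} {k : ℕ} (hk : k < B.deg a) (h : B.next^[k] a = b) :
    k = steps a b := by
  have hf : a.fst = b.fst := by rw [← h, fst_iterate_next]
  exact Function.iterate_injOn_Iio_minimalPeriod (f := B.next) (x := a) hk (steps_lt hf)
    (h.trans (iterate_steps hf).symm)

lemma steps_self (a : B.Arrow) : steps a a = 0 := (eq_steps (deg_pos a) rfl).symm

lemma steps_eq_zero {a b : B.Arrow} (h : a.fst = b.fst) : steps a b = 0 ↔ a = b :=
  ⟨fun h0 => by simpa [h0] using iterate_steps h, fun h => by rw [h, steps_self]⟩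

lemma steps_pos {a b : B.Arrow} (h : a.fst = b.fst) (hab : a ≠ b) : 0 < steps a b :=
  Nat.pos_of_ne_zero fun h0 => hab ((steps_eq_zero h).1 h0)

lemma deg_eq_of_fst_eq {a b : B.Arrow} (h : a.fst = b.fst) : B.deg a = B.deg b := by
  rw [← iterate_steps h, deg_iterate]

lemma steps_add_steps_of_le {a b c : B.Arrow} (hab : a.fst = b.fst) (hac : a.fst = c.fst)
    (h : steps a b ≤ steps a c) : steps a b + steps b c = steps a c := by
  have : steps a c - steps a b = steps b c := by
    apply eq_steps
    · rw [← deg_eq_of_fst_eq hab]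
      exact lt_of_le_of_lt (Nat.sub_le _ _) (steps_lt hac)
    · have hb : B.next^[steps a c - steps a b] b =
          B.next^[steps a c - steps a b] (B.next^[steps a b] a) := by rw [iterate_steps hab]
      rw [hb, ← Function.iterate_add_apply, Nat.sub_add_cancel h, iterate_steps hac]
  omega

lemma steps_add_steps_of_lt {a b c : B.Arrow} (hab : a.fst = b.fst) (hac : a.fst = c.fst)
    (h : steps a c < steps a b) : steps a b + steps b c = steps a c + B.deg a := by
  have hb := steps_lt hab
  have : steps a c + B.deg a - steps a b = steps b c := by
    apply eq_steps
    · rw [← deg_eq_of_fst_eq hab]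
      omega
    · have hb' : B.next^[steps a c + B.deg a - steps a b] b =
          B.next^[steps a c + B.deg a - steps a b] (B.next^[steps a b] a) := by
        rw [iterate_steps hab]
      rw [hb', ← Function.iterate_add_apply, Nat.sub_add_cancel (by omega),
        Function.iterate_add_apply, iterate_deg, iterate_steps hac]
  omega

end Combinatorics

section Algebra

variable {V : Type v} (B : BrauerTree V) (K : Type u) [Field K]

/-- The quotient map from the free algebra. -/
noncomputable def toAlg : B.Free K →ₐ[K] B.Alg K := RingQuot.mkAlgHom K (B.Rel K)

lemma toAlg_surjective : Function.Surjective (B.toAlg K) := RingQuot.mkAlgHom_surjective K (B.Rel K)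

lemma toAlg_rel {a b : B.Free K} (h : B.Rel K a b) : B.toAlg K a = B.toAlg K b :=
  RingQuot.mkAlgHom_rel K h

variable {B}

lemma toAlg_freeE (x : B.Vertex) : B.toAlg K (B.freeE K x) = B.e K x := rfl

lemma toAlg_freeArr (d : B.Arrow) : B.toAlg K (B.freeArr K d) = B.arr K d := rfl

lemma e_mul_self (x : B.Vertex) : B.e K x * B.e K x = B.e K x := by
  simpa only [map_mul, toAlg_freeE, toAlg_freeArr] using B.toAlg_rel K (Rel.idem x)

lemma e_mul_e_of_ne {x y : B.Vertex} (h : x ≠ y) : B.e K x * B.e K y = 0 := by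
  simpa only [map_mul, map_zero, toAlg_freeE, toAlg_freeArr] using B.toAlg_rel K (Rel.orth x y h)

lemma e_source_mul_arr (d : B.Arrow) : B.e K (B.source d) * B.arr K d = B.arr K d := by
  simpa only [map_mul, toAlg_freeE, toAlg_freeArr] using B.toAlg_rel K (Rel.left d)

lemma arr_mul_e_target (d : B.Arrow) : B.arr K d * B.e K (B.target d) = B.arr K d := by
  simpa only [map_mul, toAlg_freeE, toAlg_freeArr] using B.toAlg_rel K (Rel.right d)

lemma e_mul_arr_of_ne {x : B.Vertex} {d : B.Arrow} (h : x ≠ B.source d) :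
    B.e K x * B.arr K d = 0 := by
  rw [← e_source_mul_arr, ← mul_assoc, e_mul_e_of_ne K h, zero_mul]

lemma arr_mul_e_of_ne {x : B.Vertex} {d : B.Arrow} (h : B.target d ≠ x) :
    B.arr K d * B.e K x = 0 := by
  rw [← arr_mul_e_target, mul_assoc, e_mul_e_of_ne K h, mul_zero]

lemma arr_mul_arr_of_ne {d d' : B.Arrow} (h : d' ≠ B.next d) : B.arr K d * B.arr K d' = 0 := by
  by_cases h' : B.target d = B.source d'
  · simpa only [map_mul, map_zero, toAlg_freeE, toAlg_freeArr] using
      B.toAlg_rel K (Rel.zero d d' h' h)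
  · rw [← arr_mul_e_target, mul_assoc, e_mul_arr_of_ne K h', mul_zero]

/-- The product of `k` consecutive arrows on a cycle, starting with `d`. -/
noncomputable def walk (d : B.Arrow) (k : ℕ) : B.Alg K :=
  ((List.iterate B.next d k).map (B.arr K)).prod

lemma walk_zero (d : B.Arrow) : walk K d 0 = 1 := rfl

lemma walk_succ (d : B.Arrow) (k : ℕ) :
    walk K d (k + 1) = B.arr K d * walk K (B.next d) k := by
  simp [walk, List.iterate]

lemma walk_one (d : B.Arrow) : walk K d 1 = B.arr K d := by
  rw [walk_succ, walk_zero, mul_one]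

lemma walk_add (d : B.Arrow) (j k : ℕ) :
    walk K d (j + k) = walk K d j * walk K (B.next^[j] d) k := by
  induction j generalizing d with
  | zero => simp [walk_zero]
  | succ j ih =>
    rw [Nat.add_right_comm, walk_succ, ih, walk_succ, mul_assoc, Function.iterate_succ_apply]

lemma walk_deg_symm (d : B.Arrow) : walk K d.symm (B.deg d.symm) = walk K d (B.deg d) := by
  have := B.toAlg_rel K (Rel.cycle d)
  rw [map_list_prod, map_list_prod, List.map_map, List.map_map] at this
  exact this.symm

lemma e_source_mul_walk (d : B.Arrow) {k : ℕ} (hk : 0 < k) :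
    B.e K (B.source d) * walk K d k = walk K d k := by
  obtain ⟨k, rfl⟩ := Nat.exists_eq_succ_of_ne_zero hk.ne'
  rw [Nat.succ_eq_add_one, walk_succ, ← mul_assoc, e_source_mul_arr]

lemma e_mul_walk_of_ne {x : B.Vertex} {d : B.Arrow} (h : x ≠ B.source d) {k : ℕ} (hk : 0 < k) :
    B.e K x * walk K d k = 0 := by
  rw [← e_source_mul_walk K d hk, ← mul_assoc, e_mul_e_of_ne K h, zero_mul]

lemma walk_succ' (d : B.Arrow) (k : ℕ) :
    walk K d (k + 1) = walk K d k * B.arr K (B.next^[k] d) := by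
  rw [walk_add, walk_one]

lemma walk_mul_e (d : B.Arrow) {k : ℕ} (hk : 0 < k) :
    walk K d k * B.e K (B.source (B.next^[k] d)) = walk K d k := by
  obtain ⟨k, rfl⟩ := Nat.exists_eq_succ_of_ne_zero hk.ne'
  rw [Nat.succ_eq_add_one, walk_succ', mul_assoc, Function.iterate_succ_apply']
  exact congrArg _ (arr_mul_e_target K _)

lemma walk_mul_e_of_ne {x : B.Vertex} {d : B.Arrow} {k : ℕ} (h : B.source (B.next^[k] d) ≠ x)
    (hk : 0 < k) : walk K d k * B.e K x = 0 := by
  rw [← walk_mul_e K d hk, mul_assoc, e_mul_e_of_ne K h, mul_zero]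

lemma arr_mul_walk_of_ne {a d : B.Arrow} (h : d ≠ B.next a) {k : ℕ} (hk : 0 < k) :
    B.arr K a * walk K d k = 0 := by
  obtain ⟨k, rfl⟩ := Nat.exists_eq_succ_of_ne_zero hk.ne'
  rw [Nat.succ_eq_add_one, walk_succ, ← mul_assoc, arr_mul_arr_of_ne K h, zero_mul]

lemma walk_mul_walk_of_ne {a d : B.Arrow} {j k : ℕ} (h : d ≠ B.next^[j] a) (hj : 0 < j)
    (hk : 0 < k) : walk K a j * walk K d k = 0 := by
  obtain ⟨j, rfl⟩ := Nat.exists_eq_succ_of_ne_zero hj.ne'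
  rw [Nat.succ_eq_add_one, Function.iterate_succ_apply'] at h
  rw [Nat.succ_eq_add_one, walk_succ', mul_assoc, arr_mul_walk_of_ne K h hk, mul_zero]

lemma sum_e [Fintype B.Vertex] : ∑ x : B.Vertex, B.e K x = 1 := by
  have := B.toAlg_rel K Rel.one
  rw [map_one, finsum_eq_sum_of_fintype, map_sum] at this
  exact this

variable [Finite V]

lemma walk_of_deg_lt {d : B.Arrow} {k : ℕ} (hk : B.deg d < k) : walk K d k = 0 := by
  obtain ⟨m, rfl⟩ := Nat.exists_eq_add_of_lt hk
  rw [add_assoc, walk_add, iterate_deg, ← walk_deg_symm,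
    walk_mul_walk_of_ne K ((iterate_deg d.symm).symm ▸ (symm_ne_self d).symm) (deg_pos _)
      (Nat.succ_pos m)]

end Algebra

section Spanning

variable {V : Type v} (B : BrauerTree V) (K : Type u) [Field K]

/-- The idempotents and the nonempty walks along the cycles of the quiver; they span `A`. The two
full cycles through a vertex occur twice. -/
def spanningSet : Set (B.Alg K) :=
  Set.range (B.e K) ∪ {a | ∃ d k, 0 < k ∧ k ≤ B.deg d ∧ a = walk K d k}

variable {B}

lemma e_mem_span (x : B.Vertex) : B.e K x ∈ Submodule.span K (B.spanningSet K) :=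
  Submodule.subset_span (Or.inl ⟨x, rfl⟩)

variable [Finite V]

lemma finite_spanningSet : (B.spanningSet K).Finite := by
  refine (Set.finite_range (B.e K)).union ((Set.finite_iUnion fun d : B.Arrow =>
    (Set.finite_Iic (B.deg d)).image (walk K d)).subset ?_)
  rintro _ ⟨d, k, -, hk, rfl⟩
  exact Set.mem_iUnion.2 ⟨d, k, hk, rfl⟩

lemma walk_mem_span (d : B.Arrow) {k : ℕ} (hk : 0 < k) :
    walk K d k ∈ Submodule.span K (B.spanningSet K) := by
  rcases le_or_gt k (B.deg d) with h | h
  · exact Submodule.subset_span (Or.inr ⟨d, k, hk, h, rfl⟩)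
  · rw [walk_of_deg_lt K h]
    exact Submodule.zero_mem _

lemma e_mul_mem_span (x : B.Vertex) {a : B.Alg K} (ha : a ∈ B.spanningSet K) :
    B.e K x * a ∈ Submodule.span K (B.spanningSet K) := by
  rcases ha with ⟨y, rfl⟩ | ⟨d, k, hk, -, rfl⟩
  · rcases eq_or_ne x y with rfl | h
    · exact (e_mul_self K x).symm ▸ e_mem_span K x
    · exact e_mul_e_of_ne K h ▸ Submodule.zero_mem _
  · rcases eq_or_ne x (B.source d) with rfl | h
    · exact (e_source_mul_walk K d hk).symm ▸ walk_mem_span K d hk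
    · exact (e_mul_walk_of_ne K h hk).symm ▸ Submodule.zero_mem _

lemma arr_mul_mem_span (b : B.Arrow) {a : B.Alg K} (ha : a ∈ B.spanningSet K) :
    B.arr K b * a ∈ Submodule.span K (B.spanningSet K) := by
  rcases ha with ⟨x, rfl⟩ | ⟨d, k, hk, -, rfl⟩
  · rcases eq_or_ne (B.target b) x with rfl | h
    · rw [arr_mul_e_target, ← walk_one]
      exact walk_mem_span K b one_pos
    · exact (arr_mul_e_of_ne K h).symm ▸ Submodule.zero_mem _
  · rcases eq_or_ne d (B.next b) with rfl | h
    · exact walk_succ K b k ▸ walk_mem_span K b k.succ_pos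
    · exact (arr_mul_walk_of_ne K h hk).symm ▸ Submodule.zero_mem _

lemma mul_mem_span (b : B.Alg K) {a : B.Alg K} (ha : a ∈ Submodule.span K (B.spanningSet K)) :
    b * a ∈ Submodule.span K (B.spanningSet K) := by
  obtain ⟨f, rfl⟩ := B.toAlg_surjective K b
  induction f using FreeAlgebra.induction generalizing a with
  | grade0 r =>
    rw [AlgHom.commutes, ← Algebra.smul_def]
    exact Submodule.smul_mem _ r ha
  | grade1 g =>
    suffices h : Submodule.span K (B.spanningSet K) ≤ (Submodule.span K (B.spanningSet K)).comap
        (LinearMap.mulLeft K (B.toAlg K (FreeAlgebra.ι K g))) from h ha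
    rw [Submodule.span_le]
    rcases g with x | d
    exacts [fun a => e_mul_mem_span K x, fun a => arr_mul_mem_span K d]
  | mul f g hf hg =>
    rw [map_mul, mul_assoc]
    exact hf (hg ha)
  | add f g hf hg =>
    rw [map_add, add_mul]
    exact Submodule.add_mem _ (hf ha) (hg ha)

lemma span_spanningSet : Submodule.span K (B.spanningSet K) = ⊤ := by
  have := Fintype.ofFinite B.Vertex
  have one_mem : (1 : B.Alg K) ∈ Submodule.span K (B.spanningSet K) :=
    sum_e (B := B) K ▸ Submodule.sum_mem _ fun x _ => e_mem_span K x
  exact eq_top_iff.2 fun a _ => mul_one a ▸ mul_mem_span K a one_mem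

instance : Module.Finite K (B.Alg K) :=
  ⟨Submodule.fg_def.2 ⟨_, finite_spanningSet K, span_spanningSet K⟩⟩

end Spanning

section Representation

variable {V : Type v} {B : BrauerTree V} (K : Type u) [Field K]

/-- The homomorphism from the Brauer tree algebra given by the images of the idempotents and of
the arrows. -/
noncomputable def liftAlg {S : Type*} [Semiring S] [Algebra K S] (E : B.Vertex → S)
    (R : B.Arrow → S)
    (h : ∀ ⦃a b : B.Free K⦄, B.Rel K a b → FreeAlgebra.lift K (Sum.elim E R) a =
      FreeAlgebra.lift K (Sum.elim E R) b) : B.Alg K →ₐ[K] S :=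
  RingQuot.liftAlgHom K ⟨FreeAlgebra.lift K (Sum.elim E R), h⟩

section

variable {S : Type*} [Semiring S] [Algebra K S] (E : B.Vertex → S) (R : B.Arrow → S)
    (h : ∀ ⦃a b : B.Free K⦄, B.Rel K a b → FreeAlgebra.lift K (Sum.elim E R) a =
      FreeAlgebra.lift K (Sum.elim E R) b)

lemma liftAlg_e (x : B.Vertex) : liftAlg K E R h (B.e K x) = E x := by
  refine (RingQuot.liftAlgHom_mkAlgHom_apply _ _ h (B.freeE K x)).trans ?_
  simp [freeE]

lemma liftAlg_arr (d : B.Arrow) : liftAlg K E R h (B.arr K d) = R d := by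
  refine (RingQuot.liftAlgHom_mkAlgHom_apply _ _ h (B.freeArr K d)).trans ?_
  simp [freeArr]

lemma liftAlg_walk (d : B.Arrow) (k : ℕ) :
    liftAlg K E R h (walk K d k) = ((List.iterate B.next d k).map R).prod := by
  rw [walk, map_list_prod, List.map_map]
  congr 2
  funext d
  exact liftAlg_arr K E R h d

lemma lift_freeArr_prod (E : B.Vertex → S) (R : B.Arrow → S) (l : List B.Arrow) :
    FreeAlgebra.lift K (Sum.elim E R) (l.map (B.freeArr K)).prod = (l.map R).prod := by
  rw [map_list_prod, List.map_map]
  congr 2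
  funext d
  simp [freeArr]

end

open Classical in
lemma character_rel [Finite V] (x : B.Vertex) ⦃a b : B.Free K⦄ (h : B.Rel K a b) :
    FreeAlgebra.lift K (Sum.elim (fun y => if y = x then (1 : K) else 0) fun _ : B.Arrow => 0) a =
    FreeAlgebra.lift K (Sum.elim (fun y => if y = x then (1 : K) else 0) fun _ => 0) b := by
  have := Fintype.ofFinite B.Vertex
  have prod_zero (d : B.Arrow) : ((B.cycleFrom d).map fun _ => (0 : K)).prod = 0 := by
    rw [cycleFrom, List.map_const', List.length_iterate, List.prod_replicate]
    exact zero_pow (deg_pos d).ne'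
  cases h with
  | idem y => simp [freeE]
  | orth y z hyz =>
    simp only [freeE, map_mul, FreeAlgebra.lift_ι_apply, Sum.elim_inl, map_zero]
    split_ifs with hy hz
    · exact absurd (hy.trans hz.symm) hyz
    all_goals simp
  | one => rw [finsum_eq_sum_of_fintype]; simp [freeE]
  | left d => simp [freeArr]
  | right d => simp [freeArr]
  | zero d d' _ _ => simp [freeArr]
  | cycle d => rw [lift_freeArr_prod, lift_freeArr_prod, prod_zero, prod_zero]

open Classical in
/-- The character of the Brauer tree algebra which belongs to the simple module at `x`. -/
noncomputable def character [Finite V] (x : B.Vertex) : B.Alg K →ₐ[K] K :=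
  liftAlg K (fun y => if y = x then 1 else 0) (fun _ => 0) (character_rel K x)

lemma character_e_self [Finite V] (x : B.Vertex) : character K x (B.e K x) = 1 := by
  rw [character, liftAlg_e, if_pos rfl]

lemma character_e_of_ne [Finite V] {x y : B.Vertex} (h : y ≠ x) : character K x (B.e K y) = 0 := by
  rw [character, liftAlg_e, if_neg h]

lemma character_walk [Finite V] (x : B.Vertex) (d : B.Arrow) {k : ℕ} (hk : 0 < k) :
    character K x (walk K d k) = 0 := by
  obtain ⟨k, rfl⟩ := Nat.exists_eq_succ_of_ne_zero hk.ne'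
  rw [Nat.succ_eq_add_one, walk_succ, map_mul, character, liftAlg_arr, zero_mul]

end Representation

section CondMap

variable (K : Type u) [Field K] {ι : Type*}

open Classical in
/-- The endomorphism of the free vector space on `ι` which sends the basis vector `i` to the basis
vector `f i` if `P i` holds, and to zero otherwise. -/
noncomputable def condMap (P : ι → Prop) (f : ι → ι) : Module.End K (ι →₀ K) :=
  Finsupp.linearCombination K fun i => if P i then Finsupp.single (f i) 1 else 0

variable {K}

open Classical in
lemma condMap_single (P : ι → Prop) (f : ι → ι) (i : ι) :
    condMap K P f (Finsupp.single i 1) = if P i then Finsupp.single (f i) 1 else 0 := by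
  simp [condMap]

lemma condMap_congr {P P' : ι → Prop} {f f' : ι → ι} (hP : ∀ i, P i ↔ P' i)
    (hf : ∀ i, P i → f i = f' i) : condMap K P f = condMap K P' f' := by
  refine Finsupp.lhom_ext' fun i => LinearMap.ext_ring ?_
  simp only [LinearMap.comp_apply, Finsupp.lsingle_apply, condMap_single]
  by_cases h : P i
  · rw [if_pos h, if_pos ((hP i).1 h), hf i h]
  · rw [if_neg h, if_neg (mt (hP i).2 h)]

lemma condMap_mul_condMap (P Q : ι → Prop) (f g : ι → ι) :
    condMap K P f * condMap K Q g = condMap K (fun i => Q i ∧ P (g i)) (f ∘ g) := by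
  refine Finsupp.lhom_ext' fun i => LinearMap.ext_ring ?_
  simp only [LinearMap.comp_apply, Finsupp.lsingle_apply, Module.End.mul_apply, condMap_single]
  by_cases hQ : Q i
  · by_cases hP : P (g i) <;> simp [hQ, hP, condMap_single]
  · simp [hQ]

lemma condMap_eq_zero {P : ι → Prop} (f : ι → ι) (hP : ∀ i, ¬ P i) : condMap K P f = 0 := by
  refine Finsupp.lhom_ext' fun i => LinearMap.ext_ring ?_
  simp [condMap_single, hP]

lemma sum_condMap_id {α : Type*} [Fintype α] (g : ι → α) :
    ∑ y, condMap K (fun i => g i = y) id = 1 := by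
  classical
  refine Finsupp.lhom_ext' fun i => LinearMap.ext_ring ?_
  simp [condMap_single]

end CondMap

section ProjectiveRepresentation

variable {V : Type v} {B : BrauerTree V} {d₀ : B.Arrow}

/-- The paths of the quiver which end at the vertex of `d₀` and are nonzero in `A` are indexed by
`Option B.Arrow`: the trivial path by `none`, a nontrivial path by `some` of its first arrow. As the
two full cycles are equal in `A`, both are indexed by `some d₀`. -/
def pathStart (d₀ : B.Arrow) : Option B.Arrow → B.Vertex
  | none => B.source d₀
  | some b => B.source b

open Classical in
/-- The index of the nontrivial path with first arrow `d` which ends at the vertex of `d₀`. -/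
noncomputable def pathIndex (d₀ d : B.Arrow) : Option B.Arrow :=
  some (if d = d₀.symm then d₀ else d)

/-- The arrow `d`, followed by the path with the given index, is a path which is nonzero in `A`. -/
def Extends (d₀ d : B.Arrow) : Option B.Arrow → Prop
  | none => B.target d = B.source d₀
  | some b => B.next d = b ∧ b.fst ∈ (B.source d₀).1 ∧ B.source b ≠ B.source d₀

lemma pathStart_pathIndex (d : B.Arrow) : pathStart d₀ (pathIndex d₀ d) = B.source d := by
  rw [pathIndex, pathStart]
  split_ifs with h
  · rw [h, source_symm]
  · rfl

lemma pathIndex_symm {d : B.Arrow} (h : B.source d = B.source d₀) :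
    pathIndex d₀ d.symm = pathIndex d₀ d := by
  rcases source_eq_source.1 h with rfl | rfl <;> simp [pathIndex]

lemma Extends.target_eq {d : B.Arrow} {i : Option B.Arrow} (h : Extends d₀ d i) :
    B.target d = pathStart d₀ i := by
  rcases i with _ | b
  · exact h
  · exact congrArg B.source h.1

lemma extends_pathIndex {d b : B.Arrow} : Extends d₀ d (pathIndex d₀ b) ↔
    B.next d = b ∧ b.fst ∈ (B.source d₀).1 ∧ B.source b ≠ B.source d₀ := by
  rw [pathIndex]
  split_ifs with h
  · simp [Extends, h, source_symm]
  · rfl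

/-- The action of an arrow on the projective module `A e_x`, where `x` is the vertex of `d₀`. -/
noncomputable def projArr (K : Type u) [Field K] (d₀ d : B.Arrow) :
    Module.End K (Option B.Arrow →₀ K) :=
  condMap K (Extends d₀ d) fun _ => pathIndex d₀ d

variable {K : Type u} [Field K]

lemma prod_projArr (d : B.Arrow) (k : ℕ) :
    ((List.iterate B.next d (k + 1)).map (projArr K d₀)).prod =
      condMap K (fun i => Extends d₀ (B.next^[k] d) i ∧ ∀ j < k,
        d.fst ∈ (B.source d₀).1 ∧ B.source (B.next^[j + 1] d) ≠ B.source d₀)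
        fun _ => pathIndex d₀ d := by
  induction k generalizing d with
  | zero => simp [List.iterate, projArr]
  | succ k ih =>
    rw [List.iterate, List.map_cons, List.prod_cons, ih, projArr, condMap_mul_condMap]
    refine condMap_congr (fun i => ?_) fun _ _ => rfl
    rw [extends_pathIndex, B.fst_next, ← Function.iterate_succ_apply, and_assoc,
      Nat.forall_lt_succ_left]
    simp [and_comm]

variable [Finite V]

lemma prod_projArr_cycleFrom (d : B.Arrow) : ((B.cycleFrom d).map (projArr K d₀)).prod =
    condMap K (fun i => i = none ∧ B.source d = B.source d₀) fun _ => pathIndex d₀ d := by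
  obtain ⟨k, hk⟩ := Nat.exists_eq_succ_of_ne_zero (deg_pos d).ne'
  have next_iterate : B.next (B.next^[k] d) = d := by
    rw [← Function.iterate_succ_apply' (f := B.next), ← hk, iterate_deg]
  rw [cycleFrom, show Function.minimalPeriod B.next d = k + 1 from hk, prod_projArr]
  refine condMap_congr (fun i => ?_) fun _ _ => rfl
  rcases i with _ | b
  · rw [Extends, target, next_iterate]
    refine ⟨fun h => ⟨rfl, h.1⟩, fun h => ⟨h.2, fun j hj =>
      ⟨h.2 ▸ fst_mem_source d, fun hj' => ?_⟩⟩⟩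
    have hd : B.next^[j + 1] d = d :=
      eq_of_source_eq_of_fst_eq (hj'.trans h.2.symm) (fst_iterate_next _ d)
    have := (eq_steps (by omega) hd).trans (steps_self d)
    omega
  · rw [Extends, next_iterate]
    simp only [reduceCtorEq, false_and, iff_false]
    rintro ⟨⟨rfl, hfst, hne⟩, h⟩
    obtain ⟨a, ha, hafst⟩ := exists_source_eq_fst_eq hfst
    have hpos : 0 < steps d a := steps_pos hafst.symm fun h => hne (h ▸ ha)
    have hlt : steps d a < B.deg d := steps_lt hafst.symm
    refine (h (steps d a - 1) (by omega)).2 ?_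
    rw [Nat.sub_add_cancel hpos, iterate_steps hafst.symm, ha]

variable (K d₀) in
lemma proj_rel ⦃a b : B.Free K⦄ (h : B.Rel K a b) :
    FreeAlgebra.lift K (Sum.elim (fun y => condMap K (fun i => pathStart d₀ i = y) id)
      (projArr K d₀)) a =
    FreeAlgebra.lift K (Sum.elim (fun y => condMap K (fun i => pathStart d₀ i = y) id)
      (projArr K d₀)) b := by
  have := Fintype.ofFinite B.Vertex
  cases h with
  | one =>
    rw [finsum_eq_sum_of_fintype]
    simpa [freeE] using sum_condMap_id (K := K) (pathStart d₀)
  | cycle d =>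
    rw [lift_freeArr_prod, lift_freeArr_prod, prod_projArr_cycleFrom, prod_projArr_cycleFrom,
      source_symm]
    exact condMap_congr (fun _ => Iff.rfl) fun i hi => (pathIndex_symm hi.2).symm
  | _ =>
    simp only [freeE, freeArr, map_mul, map_zero, FreeAlgebra.lift_ι_apply, Sum.elim_inl,
      Sum.elim_inr, projArr, condMap_mul_condMap]
    first
    | refine condMap_congr (fun i => ?_) fun _ _ => rfl
    | refine condMap_eq_zero _ fun i => ?_
    grind [pathStart_pathIndex, Extends.target_eq, extends_pathIndex]

lemma walk_ne_zero (K : Type u) [Field K] (d : B.Arrow) {k : ℕ} (hk : k ≤ B.deg d) :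
    walk K d k ≠ 0 := by
  suffices h : walk K d (B.deg d) ≠ 0 by
    intro h0
    rw [← Nat.add_sub_cancel' hk, walk_add, h0, zero_mul] at h
    exact h rfl
  intro h
  have hnone := LinearMap.congr_fun (congrArg (liftAlg K _ _ (proj_rel d K)) h)
    (Finsupp.single none 1)
  rw [liftAlg_walk, ← cycleFrom, prod_projArr_cycleFrom, condMap_single, if_pos ⟨rfl, rfl⟩,
    map_zero, LinearMap.zero_apply] at hnone
  simp at hnone

end ProjectiveRepresentation

section Corners

variable {V : Type v} {B : BrauerTree V}

lemma exists_source_eq (p : V) (x : B.Vertex) :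
    ∃ d : B.Arrow, B.source d = x ∧ (p ∈ x.1 → d.fst = p) := by
  by_cases hp : p ∈ x.1
  · obtain ⟨d, hd, hdp⟩ := exists_source_eq_fst_eq hp
    exact ⟨d, hd, fun _ => hdp⟩
  · obtain ⟨d, hd, -⟩ := exists_source_eq_fst_eq (Sym2.out_fst_mem x.1)
    exact ⟨d, hd, fun h => absurd h hp⟩

/-- The arrow which starts at `x` and lies on the cycle around the end `p` of `x`. -/
noncomputable def dartAt (p : V) (x : B.Vertex) : B.Arrow := (exists_source_eq p x).choose

lemma source_dartAt (p : V) (x : B.Vertex) : B.source (dartAt p x) = x :=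
  (exists_source_eq p x).choose_spec.1

lemma fst_dartAt {p : V} {x : B.Vertex} (hp : p ∈ x.1) : (dartAt p x).fst = p :=
  (exists_source_eq p x).choose_spec.2 hp

lemma eq_dartAt {d : B.Arrow} {p : V} {x : B.Vertex} (hd : d.fst = p) (hx : B.source d = x) :
    d = dartAt p x := by
  have hp : p ∈ x.1 := by rw [← hd, ← hx]; exact fst_mem_source d
  exact eq_of_source_eq_of_fst_eq (by rw [source_dartAt, hx]) (by rw [fst_dartAt hp, hd])

lemma dartAt_injective {p : V} {x y : B.Vertex} (h : dartAt p x = dartAt p y) : x = y := by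
  rw [← source_dartAt p x, h, source_dartAt]

/-- The length of the path from `x` to `y` around the common end `p`. -/
noncomputable def len (p : V) (x y : B.Vertex) : ℕ := steps (dartAt p x) (dartAt p y)

lemma lt_deg_of_ne {d : B.Arrow} {k : ℕ} {x y : B.Vertex} (hxy : x ≠ y) (hk : k ≤ B.deg d)
    (hx : B.source d = x) (hy : B.source (B.next^[k] d) = y) : k < B.deg d := by
  refine lt_of_le_of_ne hk fun h => hxy ?_
  rw [← hx, ← hy, h, iterate_deg]

lemma e_mul_walk_mul_e_eq_zero {K : Type u} [Field K] {x y : B.Vertex} {d : B.Arrow} {k : ℕ}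
    (hk : 0 < k)
    (h : ¬ (B.source d = x ∧ B.source (B.next^[k] d) = y)) :
    B.e K x * walk K d k * B.e K y = 0 := by
  by_cases hx : x = B.source d
  · rw [mul_assoc, walk_mul_e_of_ne K (fun h' => h ⟨hx.symm, h'⟩) hk, mul_zero]
  · rw [e_mul_walk_of_ne K hx hk, zero_mul]

variable [Finite V]

lemma iterate_len {p : V} {x y : B.Vertex} (hx : p ∈ x.1) (hy : p ∈ y.1) :
    B.next^[len p x y] (dartAt p x) = dartAt p y :=
  iterate_steps (by rw [fst_dartAt hx, fst_dartAt hy])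

lemma len_pos {p : V} {x y : B.Vertex} (hx : p ∈ x.1) (hy : p ∈ y.1) (hxy : x ≠ y) :
    0 < len p x y :=
  steps_pos (by rw [fst_dartAt hx, fst_dartAt hy]) fun h => hxy (dartAt_injective h)

lemma len_lt_deg {p : V} {x y : B.Vertex} (hx : p ∈ x.1) (hy : p ∈ y.1) :
    len p x y < B.deg (dartAt p x) :=
  steps_lt (by rw [fst_dartAt hx, fst_dartAt hy])

lemma len_add_len_of_le {p : V} {x y z : B.Vertex} (hx : p ∈ x.1) (hy : p ∈ y.1) (hz : p ∈ z.1)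
    (h : len p x y ≤ len p x z) : len p x y + len p y z = len p x z :=
  steps_add_steps_of_le (by rw [fst_dartAt hx, fst_dartAt hy])
    (by rw [fst_dartAt hx, fst_dartAt hz]) h

lemma len_add_len_of_lt {p : V} {x y z : B.Vertex} (hx : p ∈ x.1) (hy : p ∈ y.1) (hz : p ∈ z.1)
    (h : len p x z < len p x y) :
    len p x y + len p y z = len p x z + B.deg (dartAt p x) :=
  steps_add_steps_of_lt (by rw [fst_dartAt hx, fst_dartAt hy])
    (by rw [fst_dartAt hx, fst_dartAt hz]) h

lemma len_le_of_len_le {p : V} {x y z : B.Vertex} (hx : p ∈ x.1) (hy : p ∈ y.1) (hz : p ∈ z.1)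
    (h : len p y z ≤ len p x z) : len p x y ≤ len p x z := by
  by_contra! h'
  have := len_add_len_of_lt hx hy hz h'
  have := len_lt_deg hx hy
  omega

variable (K : Type u) [Field K]

/-- The path from `x` to `y` around the common end `p`, as an element of the algebra. -/
noncomputable def pth (p : V) (x y : B.Vertex) : B.Alg K := walk K (dartAt p x) (len p x y)

variable {K}

lemma pth_mul_pth {p : V} {x y z : B.Vertex} (hx : p ∈ x.1) (hy : p ∈ y.1) (hz : p ∈ z.1)
    (h : len p x y ≤ len p x z) : pth K p x y * pth K p y z = pth K p x z := by
  rw [pth, pth, pth, ← len_add_len_of_le hx hy hz h, walk_add, iterate_len hx hy]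

lemma pth_mul_pth_eq_zero {p : V} {x y z : B.Vertex} (hx : p ∈ x.1) (hy : p ∈ y.1) (hz : p ∈ z.1)
    (hxz : x ≠ z) (h : len p x z < len p x y) : pth K p x y * pth K p y z = 0 := by
  have h1 := len_add_len_of_lt hx hy hz h
  have h2 := len_pos hx hz hxz
  rw [pth, pth, ← iterate_len hx hy, ← walk_add, h1, walk_of_deg_lt K (by omega)]

lemma pth_mul_pth_of_ne {p q : V} {x y z : B.Vertex} (hpq : p ≠ q) (hxy : x ≠ y) (hyz : y ≠ z)
    (hpx : p ∈ x.1) (hpy : p ∈ y.1) (hqy : q ∈ y.1) (hqz : q ∈ z.1) :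
    pth K p x y * pth K q y z = 0 := by
  refine walk_mul_walk_of_ne K ?_ (len_pos hpx hpy hxy) (len_pos hqy hqz hyz)
  rw [iterate_len hpx hpy]
  intro h
  have := congrArg (fun d : B.Arrow => d.fst) h
  simp only [fst_dartAt hqy, fst_dartAt hpy] at this
  exact hpq this.symm

lemma pth_ne_zero {p : V} {x y : B.Vertex} (hx : p ∈ x.1) (hy : p ∈ y.1) : pth K p x y ≠ 0 :=
  walk_ne_zero K _ (len_lt_deg hx hy).le

lemma e_mul_pth {p : V} {x y : B.Vertex} (hx : p ∈ x.1) (hy : p ∈ y.1) (hxy : x ≠ y) :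
    B.e K x * pth K p x y = pth K p x y := by
  have := e_source_mul_walk K (dartAt p x) (len_pos hx hy hxy)
  rwa [source_dartAt] at this

lemma pth_mul_e {p : V} {x y : B.Vertex} (hx : p ∈ x.1) (hy : p ∈ y.1) (hxy : x ≠ y) :
    pth K p x y * B.e K y = pth K p x y := by
  have := walk_mul_e K (dartAt p x) (len_pos hx hy hxy)
  rwa [iterate_len hx hy, source_dartAt] at this

@[elab_as_elim]
lemma alg_induction {P : B.Alg K → Prop} (e : ∀ x, P (B.e K x))
    (walk : ∀ d k, 0 < k → k ≤ B.deg d → P (walk K d k)) (zero : P 0)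
    (add : ∀ a b, P a → P b → P (a + b)) (smul : ∀ (c : K) a, P a → P (c • a)) (a : B.Alg K) :
    P a := by
  have ha : a ∈ Submodule.span K (spanningSet B K) := by
    rw [span_spanningSet]
    trivial
  induction ha using Submodule.span_induction with
  | zero => exact zero
  | add a b _ _ ha hb => exact add a b ha hb
  | smul c a _ ha => exact smul c a ha
  | mem a ha =>
    rcases ha with ⟨x, rfl⟩ | ⟨d, k, hk, hk', rfl⟩
    · exact e x
    · exact walk d k hk hk'

lemma walk_eq_pth {d : B.Arrow} {k : ℕ} {x y : B.Vertex} (hk : k < B.deg d)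
    (hx : B.source d = x) (hy : B.source (B.next^[k] d) = y) : walk K d k = pth K d.fst x y := by
  have h1 : d = dartAt d.fst x := eq_dartAt rfl hx
  have h2 : B.next^[k] d = dartAt d.fst y := eq_dartAt (fst_iterate_next k d) hy
  rw [pth, len, ← h1, ← h2, ← eq_steps hk rfl]

lemma exists_corner_eq_smul {p : V} {x y : B.Vertex} (hx : p ∈ x.1) (hy : p ∈ y.1) (hxy : x ≠ y)
    (a : B.Alg K) : ∃ c : K, B.e K x * a * B.e K y = c • pth K p x y := by
  induction a using alg_induction with
  | zero => exact ⟨0, by simp⟩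
  | add a b ha hb =>
    obtain ⟨c, hc⟩ := ha
    obtain ⟨c', hc'⟩ := hb
    exact ⟨c + c', by rw [mul_add, add_mul, hc, hc', add_smul]⟩
  | smul c a ha =>
    obtain ⟨c', hc'⟩ := ha
    exact ⟨c * c', by rw [mul_smul_comm, smul_mul_assoc, hc', mul_smul]⟩
  | e z =>
    refine ⟨0, ?_⟩
    rw [zero_smul]
    by_cases hz : x = z
    · rw [← hz, e_mul_self, e_mul_e_of_ne K hxy]
    · rw [e_mul_e_of_ne K hz, zero_mul]
  | walk d k hk hk' =>
    by_cases h : B.source d = x ∧ B.source (B.next^[k] d) = y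
    · refine ⟨1, ?_⟩
      have hdx : d.fst ∈ x.1 := by rw [← h.1]; exact fst_mem_source d
      have hdy : d.fst ∈ y.1 := by
        rw [← h.2, ← fst_iterate_next k d]; exact fst_mem_source _
      rw [walk_eq_pth (lt_deg_of_ne hxy hk' h.1 h.2) h.1 h.2,
        eq_of_mem_of_mem hxy hx hy hdx hdy, e_mul_pth hdx hdy hxy, pth_mul_e hdx hdy hxy, one_smul]
    · exact ⟨0, by rw [e_mul_walk_mul_e_eq_zero hk h, zero_smul]⟩

lemma corner_eq_zero {x y : B.Vertex} (h : ∀ p, p ∈ x.1 → p ∉ y.1) (a : B.Alg K) :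
    B.e K x * a * B.e K y = 0 := by
  induction a using alg_induction with
  | zero => simp
  | add a b ha hb => rw [mul_add, add_mul, ha, hb, add_zero]
  | smul c a ha => rw [mul_smul_comm, smul_mul_assoc, ha, smul_zero]
  | e z =>
    by_cases hz : x = z
    · rw [← hz, e_mul_self, e_mul_e_of_ne K]
      rintro rfl
      exact h _ (Sym2.out_fst_mem x.1) (Sym2.out_fst_mem x.1)
    · rw [e_mul_e_of_ne K hz, zero_mul]
  | walk d k hk _ =>
    refine e_mul_walk_mul_e_eq_zero hk ?_
    rintro ⟨rfl, rfl⟩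
    refine h d.fst (fst_mem_source d) ?_
    rw [← fst_iterate_next k d]; exact fst_mem_source _

lemma eq_deg_of_source_iterate_eq {d : B.Arrow} {k : ℕ} (hk : 0 < k) (hk' : k ≤ B.deg d)
    (h : B.source (B.next^[k] d) = B.source d) : k = B.deg d := by
  by_contra hne
  have hd := eq_of_source_eq_of_fst_eq h (fst_iterate_next k d)
  have := (eq_steps (lt_of_le_of_ne hk' hne) hd).trans (steps_self d)
  omega

lemma pth_mul_walk_deg {p : V} {x y : B.Vertex} (hx : p ∈ x.1) (hy : p ∈ y.1) (hxy : x ≠ y)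
    (d : B.Arrow) : pth K p x y * walk K d (B.deg d) = 0 := by
  by_cases hd : d = B.next^[len p x y] (dartAt p x)
  · rw [pth, hd, ← walk_add, walk_of_deg_lt]
    rw [deg_iterate]
    have := len_pos hx hy hxy
    omega
  · exact walk_mul_walk_of_ne K hd (len_pos hx hy hxy) (deg_pos d)

lemma pth_mul_corner {p : V} {x y : B.Vertex} (hx : p ∈ x.1) (hy : p ∈ y.1) (hxy : x ≠ y)
    (a : B.Alg K) :
    pth K p x y * (B.e K y * a * B.e K y) = character K y a • pth K p x y := by
  induction a using alg_induction with
  | zero => simp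
  | add a b ha hb => rw [mul_add, add_mul, mul_add, ha, hb, map_add, add_smul]
  | smul c a ha =>
    rw [mul_smul_comm, smul_mul_assoc, mul_smul_comm, ha, map_smul, smul_assoc]
  | e z =>
    by_cases hz : z = y
    · rw [hz, e_mul_self, e_mul_self, character_e_self, one_smul, pth_mul_e hx hy hxy]
    · rw [e_mul_e_of_ne K (Ne.symm hz), zero_mul, mul_zero, character_e_of_ne K hz, zero_smul]
  | walk d k hk hk' =>
    rw [character_walk K y d hk, zero_smul]
    by_cases h : B.source d = y ∧ B.source (B.next^[k] d) = y
    · obtain rfl := eq_deg_of_source_iterate_eq hk hk' (h.2.trans h.1.symm)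
      rw [mul_assoc, ← mul_assoc, pth_mul_e hx hy hxy, ← mul_assoc, pth_mul_walk_deg hx hy hxy,
        zero_mul]
    · rw [e_mul_walk_mul_e_eq_zero hk h, mul_zero]

lemma mem_and_eq_len_of_source_iterate_eq {p : V} {x y : B.Vertex} {n : ℕ}
    (hx : p ∈ x.1) (hn : n < B.deg (dartAt p x)) (h : B.source (B.next^[n] (dartAt p x)) = y) :
    p ∈ y.1 ∧ n = len p x y := by
  have hfst : (B.next^[n] (dartAt p x)).fst = p := by rw [fst_iterate_next, fst_dartAt hx]
  refine ⟨?_, eq_steps hn (eq_dartAt hfst h)⟩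
  have := fst_mem_source (B.next^[n] (dartAt p x))
  rwa [hfst, h] at this

end Corners

section Paths

variable {V : Type v} {B : BrauerTree V} {K : Type u} [Field K]

lemma eq_iterate_of_isChain {d : B.Arrow} {l : List B.Arrow}
    (h : (d :: l).IsChain fun a b => B.arr K a * B.arr K b ≠ 0) :
    d :: l = List.iterate B.next d (l.length + 1) := by
  induction l generalizing d with
  | nil => rfl
  | cons d' l ih =>
    rw [List.isChain_cons_cons] at h
    have hd : d' = B.next d := not_imp_comm.1 (arr_mul_arr_of_ne K) h.1
    rw [List.length_cons, List.iterate, ← hd, ← ih h.2]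

lemma isChain_of_prod_ne_zero {l : List B.Arrow} (h : (l.map (B.arr K)).prod ≠ 0) :
    l.IsChain fun a b => B.arr K a * B.arr K b ≠ 0 := by
  induction l with
  | nil => exact List.isChain_nil
  | cons d l ih =>
    rw [List.map_cons, List.prod_cons] at h
    rcases l with _ | ⟨d', l⟩
    · exact List.isChain_singleton d
    · refine List.isChain_cons_cons.2 ⟨fun hd => h ?_, ih (right_ne_zero_of_mul h)⟩
      rw [List.map_cons, List.prod_cons, ← mul_assoc, hd, zero_mul]

lemma IsPath.source_iterate {x y : B.Vertex} {d : B.Arrow} {k : ℕ}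
    (h : B.IsPath x (List.iterate B.next d k) y) (hk : 0 < k) :
    B.source d = x ∧ B.source (B.next^[k] d) = y := by
  induction k generalizing d x with
  | zero => omega
  | succ k ih =>
    obtain ⟨h1, h2⟩ := h
    refine ⟨h1, ?_⟩
    rcases Nat.eq_zero_or_pos k with rfl | hk
    · exact h2
    · exact (ih h2 hk).2

lemma isPath_iterate (d : B.Arrow) (k : ℕ) :
    B.IsPath (B.source d) (List.iterate B.next d k) (B.source (B.next^[k] d)) := by
  induction k generalizing d with
  | zero => rfl
  | succ k ih => exact ⟨rfl, ih (B.next d)⟩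

variable [Finite V]

lemma isPath_pth {p : V} {x y : B.Vertex} (hx : p ∈ x.1) (hy : p ∈ y.1) :
    B.IsPath x (List.iterate B.next (dartAt p x) (len p x y)) y := by
  have := isPath_iterate (dartAt p x) (len p x y)
  rwa [iterate_len hx hy, source_dartAt, source_dartAt] at this

lemma IsPath.eq_pth {x y : B.Vertex} (hxy : x ≠ y) {l : List B.Arrow} (h : B.IsPath x l y)
    (hl : (l.map (B.arr K)).prod ≠ 0) :
    ∃ p, p ∈ x.1 ∧ p ∈ y.1 ∧ l = List.iterate B.next (dartAt p x) (len p x y) := by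
  rcases l with _ | ⟨d, l⟩
  · exact absurd h hxy
  have hd := eq_iterate_of_isChain (isChain_of_prod_ne_zero hl)
  rw [hd] at h hl ⊢
  obtain ⟨h1, h2⟩ := h.source_iterate (Nat.succ_pos _)
  have hk : l.length + 1 ≤ B.deg d := by
    by_contra! hk
    exact hl (walk_of_deg_lt K hk)
  have hk' := lt_deg_of_ne hxy hk h1 h2
  refine ⟨d.fst, by rw [← h1]; exact fst_mem_source d, ?_, ?_⟩
  · rw [← h2, ← fst_iterate_next (l.length + 1) d]; exact fst_mem_source _
  · rw [len, ← eq_dartAt rfl h1, ← eq_dartAt (fst_iterate_next _ d) h2, ← eq_steps hk' rfl]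

end Paths

section Cycles

variable {V : Type v} {B : BrauerTree V} {K : Type u} [Field K]

lemma mem_iterate_iff {d a : B.Arrow} {k : ℕ} :
    a ∈ List.iterate B.next d k ↔ ∃ j < k, B.next^[j] d = a := by
  rw [List.mem_iterate]
  simp [eq_comm]

lemma nodup_iterate {d : B.Arrow} {k : ℕ} (hk : k ≤ B.deg d) :
    (List.iterate B.next d k).Nodup := by
  rw [List.nodup_iff_injective_getElem]
  rintro ⟨i, hi⟩ ⟨j, hj⟩ h
  rw [List.length_iterate] at hi hj
  simp only [List.getElem_iterate] at h
  exact Fin.ext (Function.iterate_injOn_Iio_minimalPeriod (f := B.next) (x := d)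
    (hi.trans_le hk) (hj.trans_le hk) h)

lemma onCycle_iff {l : List B.Arrow} {p : V} (hl : ∀ a : B.Arrow, a ∈ l ↔ a.fst = p)
    (x : B.Vertex) : B.OnCycle x l ↔ p ∈ x.1 := by
  constructor
  · rintro ⟨a, ha, rfl | rfl⟩
    · rw [← (hl a).1 ha]; exact fst_mem_source a
    · rw [← (hl a).1 ha, ← B.fst_next a]; exact fst_mem_source _
  · intro hp
    exact ⟨dartAt p x, (hl _).2 (fst_dartAt hp), Or.inl (source_dartAt p x)⟩

variable [Finite V]

lemma mem_cycleFrom_iff {d a : B.Arrow} : a ∈ B.cycleFrom d ↔ a.fst = d.fst := by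
  rw [cycleFrom, mem_iterate_iff]
  constructor
  · rintro ⟨j, -, rfl⟩
    exact fst_iterate_next j d
  · intro h
    exact ⟨steps d a, steps_lt h.symm, iterate_steps h.symm⟩

lemma arr_mul_arr_next_ne_zero {d : B.Arrow} (h : B.next d ≠ d) :
    B.arr K d * B.arr K (B.next d) ≠ 0 := by
  have h2 : 2 ≤ B.deg d := by
    by_contra! h2
    have h1 := deg_pos d
    have h3 : B.deg d = 1 := by omega
    have := iterate_deg d
    rw [h3] at this
    exact h this
  have := walk_ne_zero K d h2
  rwa [walk_succ, walk_one] at this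

lemma isChain_iterate {d : B.Arrow} (hd : 2 ≤ B.deg d) (k : ℕ) :
    (List.iterate B.next d k).IsChain fun a b => B.arr K a * B.arr K b ≠ 0 := by
  induction k generalizing d with
  | zero => exact List.isChain_nil
  | succ k ih =>
    rcases k with _ | k
    · exact List.isChain_singleton _
    · have h := ih (d := B.next d) (by rwa [show B.deg (B.next d) = B.deg d from deg_iterate 1 d])
      refine List.isChain_cons_cons.2 ⟨arr_mul_arr_next_ne_zero fun h' => ?_, h⟩
      have := eq_steps (k := 1) (by omega) h'
      rw [steps_self] at this
      omega

lemma isNonzeroChain_iterate {d : B.Arrow} {k : ℕ} (hk : k + 1 ≤ B.deg d) :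
    B.IsNonzeroChain K (List.iterate B.next d (k + 1)) := by
  refine ⟨by simp [List.iterate], nodup_iterate hk, ?_⟩
  rcases k with _ | k
  · exact List.isChain_singleton _
  · exact isChain_iterate (by omega) _

lemma isACycle_cycleFrom (d : B.Arrow) : B.IsACycle K (B.cycleFrom d) := by
  obtain ⟨k, hk⟩ := Nat.exists_eq_succ_of_ne_zero (deg_pos d).ne'
  have hc : B.cycleFrom d = List.iterate B.next d (k + 1) := congrArg _ hk
  refine ⟨hc ▸ isNonzeroChain_iterate hk.ge, ?_⟩
  rintro (_ | ⟨d', l'⟩) hl' hinf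
  · exact absurd rfl hl'.1
  have hl := eq_iterate_of_isChain hl'.2.2
  have hfst (a : B.Arrow) (ha : a ∈ d' :: l') : a.fst = d'.fst := by
    rw [hl, mem_iterate_iff] at ha
    obtain ⟨j, -, rfl⟩ := ha
    exact fst_iterate_next j d'
  have hd : d ∈ d' :: l' := hinf.subset (mem_cycleFrom_iff.2 rfl)
  have hsub : d' :: l' ⊆ B.cycleFrom d := fun a ha => by
    rw [mem_cycleFrom_iff, hfst a ha, hfst d hd]
  exact (hinf.sublist.eq_of_length_le (hl'.2.1.subperm hsub).length_le).symm

lemma IsACycle.exists_mem_iff {l : List B.Arrow} (hl : B.IsACycle K l) :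
    ∃ d : B.Arrow, ∀ a, a ∈ l ↔ a.fst = d.fst := by
  obtain ⟨⟨hne, hnd, hch⟩, hmax⟩ := hl
  rcases l with _ | ⟨d, l⟩
  · exact absurd rfl hne
  have hi := eq_iterate_of_isChain hch
  have hdeg : B.deg d ≤ l.length + 1 := by
    by_contra! h
    have h1 := hmax _ (isNonzeroChain_iterate (k := l.length + 1) h) (by
      rw [hi, List.iterate_add _ _ (l.length + 1) 1]
      exact (List.prefix_append _ _).isInfix)
    have h2 := congrArg List.length h1
    simp at h2
  refine ⟨d, fun a => ?_⟩
  rw [hi, mem_iterate_iff]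
  constructor
  · rintro ⟨j, -, rfl⟩
    exact fst_iterate_next j d
  · intro h
    exact ⟨steps d a, (steps_lt h.symm).trans_le hdeg, iterate_steps h.symm⟩

lemma exists_isACycle_iff {P : (B.Vertex → Prop) → Prop} (x : B.Vertex) :
    (∃ l : List B.Arrow, B.IsACycle K l ∧ B.OnCycle x l ∧ P (fun y => B.OnCycle y l)) ↔
      ∃ p ∈ x.1, P (fun y => p ∈ y.1) := by
  constructor
  · rintro ⟨l, hl, hx, hP⟩
    obtain ⟨d, hd⟩ := hl.exists_mem_iff
    simp only [onCycle_iff hd] at hx hP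
    exact ⟨d.fst, hx, hP⟩
  · rintro ⟨p, hp, hP⟩
    have h (a : B.Arrow) : a ∈ B.cycleFrom (dartAt p x) ↔ a.fst = p := by
      rw [mem_cycleFrom_iff, fst_dartAt hp]
    refine ⟨_, isACycle_cycleFrom (dartAt p x), ?_⟩
    simp only [onCycle_iff h]
    exact ⟨hp, hP⟩

end Cycles

section Matrices

variable {V : Type v} (B : BrauerTree V) (K : Type u) [Field K]

/-- The direct sum of the indecomposable projective modules `A e_{s i}`. -/
abbrev ProjSum {I : Type*} (s : I → B.Vertex) : Type _ := ∀ i, B.proj K (s i)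

variable {B K}

lemma mem_proj_iff {x : B.Vertex} {a : B.Alg K} : a ∈ B.proj K x ↔ a * B.e K x = a := by
  rw [Submodule.mem_span_singleton]
  constructor
  · rintro ⟨b, rfl⟩
    rw [smul_eq_mul, mul_assoc, e_mul_self]
  · intro h
    exact ⟨a, h⟩

lemma coe_mul_e {x : B.Vertex} (a : B.proj K x) : (a : B.Alg K) * B.e K x = a :=
  mem_proj_iff.1 a.2

lemma mul_e_mem_proj (x : B.Vertex) (a : B.Alg K) : a * B.e K x ∈ B.proj K x :=
  mem_proj_iff.2 (by rw [mul_assoc, e_mul_self])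

variable (K) in
/-- The generator of `A e_x`. -/
noncomputable def gen (x : B.Vertex) : B.proj K x :=
  ⟨B.e K x, Submodule.mem_span_singleton_self _⟩

lemma smul_gen {x : B.Vertex} (a : B.proj K x) : (a : B.Alg K) • gen K x = a :=
  Subtype.ext (coe_mul_e a)

variable {I J L : Type*} {s : I → B.Vertex} {t : J → B.Vertex} {r : L → B.Vertex}

open Classical in
/-- The matrix entries of a homomorphism between sums of indecomposable projective modules. -/
noncomputable def entry (F : B.ProjSum K s →ₗ[B.Alg K] B.ProjSum K t) (i : I) (j : J) : B.Alg K :=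
  F (Pi.single i (gen K (s i))) j

lemma entry_mul_e (F : B.ProjSum K s →ₗ[B.Alg K] B.ProjSum K t) (i : I) (j : J) :
    entry F i j * B.e K (t j) = entry F i j := coe_mul_e _

lemma e_mul_entry (F : B.ProjSum K s →ₗ[B.Alg K] B.ProjSum K t) (i : I) (j : J) :
    B.e K (s i) * entry F i j = entry F i j := by
  classical
  have h : B.e K (s i) • (Pi.single i (gen K (s i)) : B.ProjSum K s) =
      Pi.single i (gen K (s i)) := by
    rw [← Pi.single_smul]
    congr 1
    exact Subtype.ext (e_mul_self K _)
  rw [entry]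
  conv_rhs => rw [← h, map_smul]
  rfl

lemma e_mul_entry_mul_e (F : B.ProjSum K s →ₗ[B.Alg K] B.ProjSum K t) (i : I) (j : J) :
    B.e K (s i) * entry F i j * B.e K (t j) = entry F i j := by
  rw [e_mul_entry, entry_mul_e]

lemma entry_add (F G : B.ProjSum K s →ₗ[B.Alg K] B.ProjSum K t) (i : I) (j : J) :
    entry (F + G) i j = entry F i j + entry G i j := rfl

lemma entry_zero (i : I) (j : J) :
    entry (0 : B.ProjSum K s →ₗ[B.Alg K] B.ProjSum K t) i j = 0 := rfl

lemma entry_sum {ι : Type*} (S : Finset ι) (F : ι → B.ProjSum K s →ₗ[B.Alg K] B.ProjSum K t)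
    (i : I) (j : J) : entry (∑ k ∈ S, F k) i j = ∑ k ∈ S, entry (F k) i j := by
  classical
  induction S using Finset.induction_on with
  | empty => simp [entry_zero]
  | insert a S ha ih => rw [Finset.sum_insert ha, Finset.sum_insert ha, entry_add, ih]

lemma entry_smul (c : K) (F : B.ProjSum K s →ₗ[B.Alg K] B.ProjSum K t) (i : I) (j : J) :
    entry (c • F) i j = c • entry F i j := rfl

lemma apply_eq_sum [Fintype I] (F : B.ProjSum K s →ₗ[B.Alg K] B.ProjSum K t)
    (y : B.ProjSum K s) (j : J) :
    (F y j : B.Alg K) = ∑ i, (y i : B.Alg K) * entry F i j := by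
  classical
  have hy : y = ∑ i, (y i : B.Alg K) • (Pi.single i (gen K (s i)) : B.ProjSum K s) := by
    funext i
    rw [Finset.sum_apply, Finset.sum_eq_single i]
    · rw [Pi.smul_apply, Pi.single_eq_same, smul_gen]
    · intro i' _ hi'
      rw [Pi.smul_apply, Pi.single_eq_of_ne hi'.symm, smul_zero]
    · simp
  conv_lhs => rw [hy, map_sum, Finset.sum_apply]
  rw [AddSubmonoidClass.coe_finsetSum]
  refine Finset.sum_congr rfl fun i _ => ?_
  rw [map_smul]
  rfl

lemma entry_ext [Finite I] {F G : B.ProjSum K s →ₗ[B.Alg K] B.ProjSum K t}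
    (h : ∀ i j, entry F i j = entry G i j) : F = G := by
  have := Fintype.ofFinite I
  ext y j
  rw [apply_eq_sum, apply_eq_sum]
  simp only [h]

lemma entry_comp [Fintype J] (G : B.ProjSum K t →ₗ[B.Alg K] B.ProjSum K r)
    (F : B.ProjSum K s →ₗ[B.Alg K] B.ProjSum K t) (i : I) (l : L) :
    entry (G ∘ₗ F) i l = ∑ j, entry F i j * entry G j l := by
  rw [entry, LinearMap.comp_apply, apply_eq_sum]
  rfl

variable [Fintype I]

/-- The homomorphism with given matrix entries. -/
noncomputable def ofEntries (s : I → B.Vertex) (t : J → B.Vertex) (m : I → J → B.Alg K) :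
    B.ProjSum K s →ₗ[B.Alg K] B.ProjSum K t where
  toFun y j := ⟨(∑ i, (y i : B.Alg K) * m i j) * B.e K (t j), mul_e_mem_proj _ _⟩
  map_add' y z := by
    ext j
    simp [add_mul, Finset.sum_add_distrib]
  map_smul' a y := by
    ext j
    simp [mul_assoc, ← Finset.mul_sum]

lemma entry_ofEntries (m : I → J → B.Alg K) (i : I) (j : J) :
    entry (ofEntries s t m) i j = B.e K (s i) * m i j * B.e K (t j) := by
  classical
  rw [entry]
  change (∑ i', ((Pi.single i (gen K (s i)) : B.ProjSum K s) i' : B.Alg K) * m i' j) *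
    B.e K (t j) = _
  rw [Finset.sum_eq_single i]
  · rw [Pi.single_eq_same]; rfl
  · intro i' _ hi'
    rw [Pi.single_eq_of_ne hi', ZeroMemClass.coe_zero, zero_mul]
  · simp

open Classical in
/-- The homomorphism with the single matrix entry `e a e` at the place `(i, j)`. -/
noncomputable def elem (s : I → B.Vertex) (t : J → B.Vertex) (i : I) (j : J) (a : B.Alg K) :
    B.ProjSum K s →ₗ[B.Alg K] B.ProjSum K t :=
  ofEntries s t fun i' j' => if i' = i ∧ j' = j then a else 0

open Classical in
lemma entry_elem (i i' : I) (j j' : J) (a : B.Alg K) : entry (elem s t i j a) i' j' =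
    if i' = i ∧ j' = j then B.e K (s i') * a * B.e K (t j') else 0 := by
  rw [elem, entry_ofEntries]
  split_ifs <;> simp

lemma elem_zero (i : I) (j : J) : elem s t i j (0 : B.Alg K) = 0 :=
  entry_ext fun i' j' => by simp [entry_elem, entry_zero]

lemma elem_smul (c : K) (i : I) (j : J) (a : B.Alg K) :
    elem s t i j (c • a) = c • elem s t i j a :=
  entry_ext fun i' j' => by simp [entry_elem, entry_smul]

lemma sum_elem_entry [Fintype J] (F : B.ProjSum K s →ₗ[B.Alg K] B.ProjSum K t) :
    ∑ i, ∑ j, elem s t i j (entry F i j) = F :=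
  entry_ext fun i j => by
    classical simp [entry_sum, entry_elem, ite_and, e_mul_entry_mul_e]

omit [Fintype I] in
lemma comp_elem [Finite I] [Fintype J] [Fintype L]
    (F : B.ProjSum K s →ₗ[B.Alg K] B.ProjSum K t) (l : L) (i : I) (a : B.Alg K) :
    F ∘ₗ elem r s l i a = ∑ j, elem r t l j (a * entry F i j) := by
  classical
  cases nonempty_fintype I
  refine entry_ext fun k j => ?_
  by_cases hk : k = l
  · subst hk
    simp [entry_comp, entry_sum, entry_elem, mul_assoc, e_mul_entry, entry_mul_e]
  · simp [entry_comp, entry_sum, entry_elem, hk]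

lemma elem_comp [Fintype J] (F : B.ProjSum K s →ₗ[B.Alg K] B.ProjSum K t) (j : J) (l : L)
    (a : B.Alg K) :
    elem t r j l a ∘ₗ F = ∑ i, elem s r i l (entry F i j * a) := by
  classical
  refine entry_ext fun i k => ?_
  by_cases hk : k = l
  · subst hk
    simp [entry_comp, entry_sum, entry_elem, ← mul_assoc, e_mul_entry, entry_mul_e]
  · simp [entry_comp, entry_sum, entry_elem, hk]

instance finite_proj [Finite V] (x : B.Vertex) : Module.Finite K (B.proj K x) :=
  Module.Finite.of_injective ((B.proj K x).subtype.restrictScalars K) Subtype.val_injective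

end Matrices

end BrauerTree

section Nullhomotopic

variable (K : Type*) {A : Type*} [Field K] [Ring A] [Algebra K A]
variable {P Q : Type*} [AddCommGroup P] [Module A P] [AddCommGroup Q] [Module A Q]
  [Module K P] [IsScalarTower K A P] [Module K Q] [IsScalarTower K A Q]

/-- The homomorphisms which are homotopic to zero as maps of degree one from the complex `f` to
itself. -/
def nullhomotopic (f : P →ₗ[A] Q) : Submodule K (P →ₗ[A] Q) where
  carrier := {φ | ∃ (h : P →ₗ[A] P) (h' : Q →ₗ[A] Q), φ = f ∘ₗ h + h' ∘ₗ f}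
  zero_mem' := ⟨0, 0, by simp⟩
  add_mem' := by
    rintro _ _ ⟨h, h', rfl⟩ ⟨g, g', rfl⟩
    exact ⟨h + g, h' + g', by rw [LinearMap.comp_add, LinearMap.add_comp]; abel⟩
  smul_mem' := by
    rintro c _ ⟨h, h', rfl⟩
    refine ⟨c • h, c • h', ?_⟩
    ext x
    simp only [LinearMap.smul_apply, LinearMap.add_apply, LinearMap.comp_apply, smul_add]
    rw [← algebraMap_smul A c (h x), map_smul, algebraMap_smul]

variable {K}

lemma comp_mem_nullhomotopic (f : P →ₗ[A] Q) (h : P →ₗ[A] P) : f ∘ₗ h ∈ nullhomotopic K f :=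
  ⟨h, 0, by simp⟩

lemma comp_mem_nullhomotopic' (f : P →ₗ[A] Q) (h : Q →ₗ[A] Q) : h ∘ₗ f ∈ nullhomotopic K f :=
  ⟨0, h, by simp⟩

end Nullhomotopic

namespace BrauerTree

variable {V : Type v} {B : BrauerTree V}

section Weights

/-- A sign which distinguishes the two ends of an edge. -/
noncomputable def endSign (p : V) (x : B.Vertex) : ℤ :=
  open Classical in if p = (Quot.out x.1).1 then 1 else -1

lemma endSign_ne_zero (p : V) (x : B.Vertex) : endSign p x ≠ 0 := by
  rw [endSign]; split_ifs <;> simp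

lemma endSign_eq_neg {p q : V} {x : B.Vertex} (hp : p ∈ x.1) (hq : q ∈ x.1) (hpq : p ≠ q) :
    endSign q x = - endSign p x := by
  have h : x.1 = s((Quot.out x.1).1, (Quot.out x.1).2) := (Quot.out_eq x.1).symm
  rw [h, Sym2.mem_iff] at hp hq
  have hne : (Quot.out x.1).1 ≠ (Quot.out x.1).2 := by
    have := x.2
    rw [h] at this
    exact SimpleGraph.Adj.ne this
  rw [endSign, endSign]
  rcases hp with hp | hp <;> rcases hq with hq | hq
  · exact absurd (hp.trans hq.symm) hpq
  · rw [if_pos hp, if_neg (fun h => hne (h.symm.trans hq))]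
  · rw [if_pos hq, if_neg (fun h => hne (h.symm.trans hp)), neg_neg]
  · exact absurd (hp.trans hq.symm) hpq

/-- The position of `i` among the indices with the same edge, in the order around `p`; the orders
around the two ends of an edge are opposite to each other. -/
noncomputable def weight {I : Type*} [Fintype I] (s : I → B.Vertex) (p : V) (i : I) : ℤ :=
  endSign p (s i) * (Fintype.equivFin I i : ℕ)

variable {I : Type*} [Fintype I] {s : I → B.Vertex}

lemma weight_eq_neg {p q : V} {i : I} (hp : p ∈ (s i).1) (hq : q ∈ (s i).1) (hpq : p ≠ q) :
    weight s q i = - weight s p i := by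
  rw [weight, weight, endSign_eq_neg hp hq hpq, neg_mul]

lemma weight_injective {p : V} {i i' : I} (h : s i = s i') (hw : weight s p i = weight s p i') :
    i = i' := by
  rw [weight, weight, h] at hw
  have := mul_left_cancel₀ (endSign_ne_zero p (s i')) hw
  exact (Fintype.equivFin I).injective (Fin.ext (by exact_mod_cast this))

lemma weight_le_weight_iff_of_ne {p q : V} {i i' : I} (h : s i = s i') (hp : p ∈ (s i).1)
    (hq : q ∈ (s i).1) (hpq : p ≠ q) : weight s q i ≤ weight s q i' ↔
      weight s p i' ≤ weight s p i := by
  rw [weight_eq_neg hp hq hpq, weight_eq_neg (h ▸ hp) (h ▸ hq) hpq, neg_le_neg_iff]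

end Weights

variable {I J : Type*} [Fintype I] [Fintype J]

/-- A matching of sources and sinks around each vertex of the tree, which is stable with respect to
the lengths of the paths. -/
structure Matching (s : I → B.Vertex) (t : J → B.Vertex) where
  rel : V → I → J → Prop
  mem_left : ∀ {p i j}, rel p i j → p ∈ (s i).1
  mem_right : ∀ {p i j}, rel p i j → p ∈ (t j).1
  right_unique : ∀ {p i j j'}, rel p i j → rel p i j' → j = j'
  left_unique : ∀ {p i i' j}, rel p i j → rel p i' j → i = i'
  stable : ∀ {p i j}, p ∈ (s i).1 → p ∈ (t j).1 →
    (∃ j', rel p i j' ∧ len p (s i) (t j') ≤ len p (s i) (t j) ∧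
      (t j' = t j → weight t p j' ≤ weight t p j)) ∨
    ∃ i', rel p i' j ∧ len p (s i') (t j) ≤ len p (s i) (t j) ∧
      (s i' = s i → weight s p i ≤ weight s p i')

lemma nonempty_matching (s : I → B.Vertex) (t : J → B.Vertex) : Nonempty (Matching s t) := by
  choose m hR h1 h2 h3 using fun p : V =>
    exists_stable_matching (fun i j => p ∈ (s i).1 ∧ p ∈ (t j).1)
      (fun i j => toLex (len p (s i) (t j), weight t p j - weight s p i))
  refine ⟨⟨m, fun {p i j} h => (hR p i j h).1, fun {p i j} h => (hR p i j h).2,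
    fun {p i j j'} => h1 p i j j', fun {p i i' j} => h2 p i i' j, fun {p i j} hi hj => ?_⟩⟩
  rcases h3 p i j ⟨hi, hj⟩ with ⟨j', hm, hl⟩ | ⟨i', hm, hl⟩
  · refine Or.inl ⟨j', hm, ?_⟩
    rw [Prod.Lex.le_iff] at hl
    simp only [ofLex_toLex] at hl
    rcases hl with hl | ⟨hl, hl'⟩
    · exact ⟨hl.le, fun h => absurd (h ▸ hl) (lt_irrefl _)⟩
    · exact ⟨hl.le, fun _ => by linarith⟩
  · refine Or.inr ⟨i', hm, ?_⟩
    rw [Prod.Lex.le_iff] at hl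
    simp only [ofLex_toLex] at hl
    rcases hl with hl | ⟨hl, hl'⟩
    · exact ⟨hl.le, fun h => absurd (h ▸ hl) (lt_irrefl _)⟩
    · exact ⟨hl.le, fun _ => by linarith⟩

namespace Matching

variable {s : I → B.Vertex} {t : J → B.Vertex} (m : Matching s t) (K : Type u) [Field K]

open Classical in
/-- The homomorphism whose entries are the paths between matched sources and sinks. -/
noncomputable def map : B.ProjSum K s →ₗ[B.Alg K] B.ProjSum K t :=
  ofEntries s t fun i j => if h : ∃ p, m.rel p i j then pth K h.choose (s i) (t j) else 0

variable {K}

lemma entry_map_of_not {i : I} {j : J} (h : ¬ ∃ p, m.rel p i j) : entry (m.map K) i j = 0 := by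
  rw [map, entry_ofEntries, dif_neg h, mul_zero, zero_mul]

lemma elem_mem_of_left {i i' : I} {j : J} {a : B.Alg K}
    (h : ∀ j', j' ≠ j → elem s t i j' (a * entry (m.map K) i' j') ∈ nullhomotopic K (m.map K)) :
    elem s t i j (a * entry (m.map K) i' j) ∈ nullhomotopic K (m.map K) := by
  classical
  have h1 := comp_mem_nullhomotopic (K := K) (m.map K) (elem s s i i' a)
  rw [comp_elem, ← Finset.add_sum_erase _ _ (Finset.mem_univ j)] at h1
  exact (Submodule.add_mem_iff_left _
    (Submodule.sum_mem _ fun j' hj' => h j' (Finset.ne_of_mem_erase hj'))).1 h1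

lemma elem_mem_of_right {i : I} {j j' : J} {a : B.Alg K}
    (h : ∀ i', i' ≠ i → elem s t i' j (entry (m.map K) i' j' * a) ∈ nullhomotopic K (m.map K)) :
    elem s t i j (entry (m.map K) i j' * a) ∈ nullhomotopic K (m.map K) := by
  classical
  have h1 := comp_mem_nullhomotopic' (K := K) (m.map K) (elem t t j' j a)
  rw [elem_comp, ← Finset.add_sum_erase _ _ (Finset.mem_univ i)] at h1
  exact (Submodule.add_mem_iff_left _
    (Submodule.sum_mem _ fun i' hi' => h i' (Finset.ne_of_mem_erase hi'))).1 h1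

variable [Finite V]

lemma entry_map_of_rel (hst : ∀ i j, s i ≠ t j) {p : V} {i : I} {j : J} (h : m.rel p i j) :
    entry (m.map K) i j = pth K p (s i) (t j) := by
  have h' : ∃ p, m.rel p i j := ⟨p, h⟩
  rw [map, entry_ofEntries, dif_pos h',
    eq_of_mem_of_mem (hst i j) (m.mem_left h'.choose_spec) (m.mem_right h'.choose_spec)
      (m.mem_left h) (m.mem_right h), e_mul_pth (m.mem_left h) (m.mem_right h) (hst i j),
    pth_mul_e (m.mem_left h) (m.mem_right h) (hst i j)]

/-- The path from `i` to `j` around `p` is homotopic to zero. -/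
def Null (K : Type u) [Field K] (p : V) (i : I) (j : J) : Prop :=
  elem s t i j (pth K p (s i) (t j)) ∈ nullhomotopic K (m.map K)

lemma elem_pth_mul_mem_of_right (hst : ∀ i j, s i ≠ t j) {p : V} {i : I} {j j' : J}
    (h : m.rel p i j') {a : B.Alg K}
    (hrec : ∀ q i', q ≠ p → m.rel q i' j' →
      elem s t i' j (pth K q (s i') (t j') * a) ∈ nullhomotopic K (m.map K)) :
    elem s t i j (pth K p (s i) (t j') * a) ∈ nullhomotopic K (m.map K) := by
  rw [← m.entry_map_of_rel hst h]
  refine m.elem_mem_of_right fun i' hi' => ?_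
  by_cases hq : ∃ q, m.rel q i' j'
  · obtain ⟨q, hq⟩ := hq
    rw [m.entry_map_of_rel hst hq]
    exact hrec q i' (fun hqp => hi' (m.left_unique (hqp ▸ hq) h)) hq
  · rw [m.entry_map_of_not hq, zero_mul, elem_zero]
    exact Submodule.zero_mem _

lemma elem_mul_pth_mem_of_left (hst : ∀ i j, s i ≠ t j) {p : V} {i i' : I} {j : J}
    (h : m.rel p i' j) {a : B.Alg K}
    (hrec : ∀ q j', q ≠ p → m.rel q i' j' →
      elem s t i j' (a * pth K q (s i') (t j')) ∈ nullhomotopic K (m.map K)) :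
    elem s t i j (a * pth K p (s i') (t j)) ∈ nullhomotopic K (m.map K) := by
  rw [← m.entry_map_of_rel hst h]
  refine m.elem_mem_of_left fun j' hj' => ?_
  by_cases hq : ∃ q, m.rel q i' j'
  · obtain ⟨q, hq⟩ := hq
    rw [m.entry_map_of_rel hst hq]
    exact hrec q j' (fun hqp => hj' (m.right_unique (hqp ▸ hq) h)) hq
  · rw [m.entry_map_of_not hq, mul_zero, elem_zero]
    exact Submodule.zero_mem _

lemma null_of_right (hst : ∀ i j, s i ≠ t j) {p : V} {i : I} {j j' : J} (h : m.rel p i j')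
    (hj : p ∈ (t j).1) (hl : len p (s i) (t j') ≤ len p (s i) (t j))
    (hrec : t j' = t j → ∀ q i', q ≠ p → m.rel q i' j' → m.Null K q i' j) :
    m.Null K p i j := by
  have hi := m.mem_left h
  have hj' := m.mem_right h
  by_cases hjj : t j' = t j
  · have key := m.elem_pth_mul_mem_of_right hst h (j := j) (a := B.e K (t j')) fun q i' hqp hq => by
      rw [pth_mul_e (m.mem_left hq) (m.mem_right hq) (hst _ _), hjj]
      exact hrec hjj q i' hqp hq
    rwa [pth_mul_e hi hj' (hst _ _), hjj] at key
  · have key := m.elem_pth_mul_mem_of_right hst h (j := j) (a := pth K p (t j') (t j))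
      fun q i' hqp hq => by
        rw [pth_mul_pth_of_ne hqp (hst _ _) hjj (m.mem_left hq) (m.mem_right hq) hj' hj, elem_zero]
        exact Submodule.zero_mem _
    rwa [pth_mul_pth hi hj' hj hl] at key

lemma null_of_left (hst : ∀ i j, s i ≠ t j) {p : V} {i i' : I} {j : J} (h : m.rel p i' j)
    (hi : p ∈ (s i).1) (hl : len p (s i') (t j) ≤ len p (s i) (t j))
    (hrec : s i' = s i → ∀ q j', q ≠ p → m.rel q i' j' → m.Null K q i j') :
    m.Null K p i j := by
  have hi' := m.mem_left h
  have hj := m.mem_right h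
  by_cases hii : s i' = s i
  · have key := m.elem_mul_pth_mem_of_left hst h (i := i) (a := B.e K (s i')) fun q j' hqp hq => by
      rw [e_mul_pth (m.mem_left hq) (m.mem_right hq) (hst _ _), hii]
      exact hrec hii q j' hqp hq
    rwa [e_mul_pth hi' hj (hst _ _), hii] at key
  · have key := m.elem_mul_pth_mem_of_left hst h (i := i) (a := pth K p (s i) (s i'))
      fun q j' hqp hq => by
        rw [pth_mul_pth_of_ne hqp.symm (Ne.symm hii) (hst _ _) hi hi' (m.mem_left hq)
          (m.mem_right hq), elem_zero]
        exact Submodule.zero_mem _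
    rwa [pth_mul_pth hi hi' hj (len_le_of_len_le hi hi' hj hl)] at key

/-- Let `i'` and `j` be matched around the start of `d`, where `j` is at the edge of `d`. The path
to `j` from any source at the edge of `i'` with larger weight is homotopic to zero. -/
def NullFromParallel (K : Type u) [Field K] (d : B.Arrow) : Prop :=
  ∀ ⦃i i' j⦄, m.rel d.fst i' j → t j = B.source d → s i = s i' →
    weight s d.fst i' ≤ weight s d.fst i → m.Null K d.fst i j

/-- Let `i` and `j'` be matched around the start of `d`, where `i` is at the edge of `d`. The path
from `i` to any sink at the edge of `j'` with smaller weight is homotopic to zero. -/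
def NullToParallel (K : Type u) [Field K] (d : B.Arrow) : Prop :=
  ∀ ⦃i j j'⦄, m.rel d.fst i j' → s i = B.source d → t j = t j' →
    weight t d.fst j ≤ weight t d.fst j' → m.Null K d.fst i j

lemma null_of_right_of_weight_le (hst : ∀ i j, s i ≠ t j) {p : V} {i : I} {j j' : J}
    (h : m.rel p i j') (hj : p ∈ (t j).1) (hl : len p (s i) (t j') ≤ len p (s i) (t j))
    (hw : t j' = t j → weight t p j' ≤ weight t p j)
    (hrec : ∀ d : B.Arrow, d.fst ∈ (t j).1 → d.fst ≠ p → B.source d ≠ t j →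
      m.NullToParallel K d) :
    m.Null K p i j := by
  refine m.null_of_right hst h hj hl fun hjj q i' hqp hq => ?_
  obtain ⟨d, hd, rfl⟩ := exists_source_eq_fst_eq (m.mem_left hq)
  have hqj : d.fst ∈ (t j).1 := hjj ▸ m.mem_right hq
  exact hrec d hqj hqp (hd ▸ hst i' j) hq hd.symm hjj.symm
    ((weight_le_weight_iff_of_ne hjj.symm hj hqj hqp.symm).2 (hw hjj))

lemma null_of_left_of_weight_le (hst : ∀ i j, s i ≠ t j) {p : V} {i i' : I} {j : J}
    (h : m.rel p i' j) (hi : p ∈ (s i).1) (hl : len p (s i') (t j) ≤ len p (s i) (t j))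
    (hw : s i' = s i → weight s p i ≤ weight s p i')
    (hrec : ∀ d : B.Arrow, d.fst ∈ (s i).1 → d.fst ≠ p → B.source d ≠ s i →
      m.NullFromParallel K d) :
    m.Null K p i j := by
  refine m.null_of_left hst h hi hl fun hii q j' hqp hq => ?_
  obtain ⟨d, hd, rfl⟩ := exists_source_eq_fst_eq (m.mem_right hq)
  have hqi : d.fst ∈ (s i).1 := hii ▸ m.mem_left hq
  exact hrec d hqi hqp (hd ▸ (hst i j').symm) hq hd.symm hii.symm
    ((weight_le_weight_iff_of_ne hii (m.mem_left h) (m.mem_left hq) hqp.symm).2 (hw hii))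

lemma ncard_branch_lt_of_fst_mem {d d' : B.Arrow} (h : d'.fst ∈ (B.source d).1)
    (hne : d'.fst ≠ d.fst) (hs : B.source d' ≠ B.source d) :
    (branch d').ncard < (branch d).ncard := by
  refine ncard_branch_lt B.isTree ((mem_source_iff.1 h).resolve_left hne) ?_
  rintro rfl
  exact hs (source_symm d)

lemma nullFromParallel_of_branch_lt (hst : ∀ i j, s i ≠ t j) {d : B.Arrow}
    (ih : ∀ d' : B.Arrow, (branch d').ncard < (branch d).ncard → m.NullToParallel K d') :
    m.NullFromParallel K d := by
  intro i i' j hm hj hi hw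
  have hjd := m.mem_right hm
  obtain ⟨j', hm', hl, hw'⟩ : ∃ j', m.rel d.fst i j' ∧
      len d.fst (s i) (t j') ≤ len d.fst (s i) (t j) ∧
      (t j' = t j → weight t d.fst j' ≤ weight t d.fst j) := by
    rcases m.stable (hi ▸ m.mem_left hm) hjd with h | ⟨i'', hm', -, hw'⟩
    · exact h
    · obtain rfl := m.left_unique hm hm'
      obtain rfl := weight_injective hi (le_antisymm (hw' hi.symm) hw)
      exact ⟨j, hm, le_rfl, fun _ => le_rfl⟩
  exact m.null_of_right_of_weight_le hst hm' hjd hl hw' fun d' hd' hne hs =>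
    ih d' (ncard_branch_lt_of_fst_mem (hj ▸ hd') hne (hj ▸ hs))

lemma nullToParallel_of_branch_lt (hst : ∀ i j, s i ≠ t j) {d : B.Arrow}
    (ih : ∀ d' : B.Arrow, (branch d').ncard < (branch d).ncard → m.NullFromParallel K d') :
    m.NullToParallel K d := by
  intro i j j' hm hi hj hw
  have hid := m.mem_left hm
  obtain ⟨i', hm', hl, hw'⟩ : ∃ i', m.rel d.fst i' j ∧
      len d.fst (s i') (t j) ≤ len d.fst (s i) (t j) ∧
      (s i' = s i → weight s d.fst i ≤ weight s d.fst i') := by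
    rcases m.stable hid (hj ▸ m.mem_right hm) with ⟨j'', hm', -, hw'⟩ | h
    · obtain rfl := m.right_unique hm hm'
      obtain rfl := weight_injective hj (le_antisymm hw (hw' hj.symm))
      exact ⟨i, hm, le_rfl, fun _ => le_rfl⟩
    · exact h
  exact m.null_of_left_of_weight_le hst hm' hid hl hw' fun d' hd' hne hs =>
    ih d' (ncard_branch_lt_of_fst_mem (hi ▸ hd') hne (hi ▸ hs))

lemma nullFromParallel_and_nullToParallel (hst : ∀ i j, s i ≠ t j) (d : B.Arrow) :
    m.NullFromParallel K d ∧ m.NullToParallel K d := by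
  induction hn : (branch d).ncard using Nat.strong_induction_on generalizing d with
  | _ n ih =>
    subst hn
    exact ⟨m.nullFromParallel_of_branch_lt hst fun d' h => (ih _ h d' rfl).2,
      m.nullToParallel_of_branch_lt hst fun d' h => (ih _ h d' rfl).1⟩

lemma null (hst : ∀ i j, s i ≠ t j) {p : V} {i : I} {j : J} (hi : p ∈ (s i).1)
    (hj : p ∈ (t j).1) : m.Null K p i j := by
  rcases m.stable hi hj with ⟨j', hm, hl, hw⟩ | ⟨i', hm, hl, hw⟩
  · exact m.null_of_right_of_weight_le hst hm hj hl hw fun d _ _ _ =>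
      (m.nullFromParallel_and_nullToParallel hst d).2
  · exact m.null_of_left_of_weight_le hst hm hi hl hw fun d _ _ _ =>
      (m.nullFromParallel_and_nullToParallel hst d).1

theorem isRigid_map (hst : ∀ i j, s i ≠ t j) : IsRigid (m.map K) := by
  intro φ
  change φ ∈ nullhomotopic K (m.map K)
  rw [← sum_elem_entry φ]
  refine Submodule.sum_mem _ fun i _ => Submodule.sum_mem _ fun j _ => ?_
  by_cases h : ∃ p, p ∈ (s i).1 ∧ p ∈ (t j).1
  · obtain ⟨p, hi, hj⟩ := h
    obtain ⟨c, hc⟩ := exists_corner_eq_smul hi hj (hst i j) (entry φ i j)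
    rw [e_mul_entry_mul_e] at hc
    rw [hc, elem_smul]
    exact Submodule.smul_mem _ c (m.null hst hi hj)
  · have := corner_eq_zero (x := s i) (y := t j) (fun p hp hp' => h ⟨p, hp, hp'⟩) (entry φ i j)
    rw [e_mul_entry_mul_e] at this
    rw [this, elem_zero]
    exact Submodule.zero_mem _

end Matching

end BrauerTree

namespace BrauerTree

variable {V : Type v} {B : BrauerTree V} {K : Type u} [Field K]
variable {I J : Type*} {s : I → B.Vertex} {t : J → B.Vertex}

section Disjoint

variable [Finite V]

lemma Superfluous.character_eq_zero {N : Submodule (B.Alg K) (B.ProjSum K t)} (hN : Superfluous N)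
    {y : B.ProjSum K t} (hy : y ∈ N) (j : J) : character K (t j) (y j) = 0 := by
  classical
  by_contra hc
  set χ := character K (t j)
  let L : Submodule (B.Alg K) (B.ProjSum K t) :=
    Submodule.comap ((B.proj K (t j)).subtype ∘ₗ LinearMap.proj j) (RingHom.ker χ)
  have mem_L (z : B.ProjSum K t) : z ∈ L ↔ χ (z j) = 0 := Iff.rfl
  have hL : L = ⊤ := by
    refine hN L (eq_top_iff.2 fun z _ => ?_)
    set c : B.Alg K := algebraMap K (B.Alg K) (χ (z j) * (χ (y j))⁻¹)
    have hz : z - c • y ∈ L := by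
      rw [mem_L, Pi.sub_apply, Pi.smul_apply, Submodule.coe_sub, Submodule.coe_smul, smul_eq_mul,
        map_sub, map_mul, AlgHom.commutes, Algebra.algebraMap_self, RingHom.id_apply,
        inv_mul_cancel_right₀ hc, sub_self]
    exact add_sub_cancel (c • y) z ▸ Submodule.add_mem_sup (N.smul_mem c hy) hz
  have hgen : Pi.single j (gen K (t j)) ∈ L := hL ▸ Submodule.mem_top
  rw [mem_L, Pi.single_eq_same, gen, character_e_self] at hgen
  exact one_ne_zero hgen

lemma character_entry_eq_zero {F : B.ProjSum K s →ₗ[B.Alg K] B.ProjSum K t}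
    (hF : Superfluous (LinearMap.range F)) (x : B.Vertex) (i : I) (j : J) :
    character K x (entry F i j) = 0 := by
  by_cases h : t j = x
  · subst h
    exact hF.character_eq_zero ⟨_, rfl⟩ j
  · rw [← entry_mul_e, map_mul, character_e_of_ne K h, mul_zero]

lemma _root_.IsRigid.source_ne_sink [Finite I] [Finite J]
    {F : B.ProjSum K s →ₗ[B.Alg K] B.ProjSum K t} (hF : IsRigid F)
    (hrange : Superfluous (LinearMap.range F)) (i : I) (j : J) : s i ≠ t j := by
  intro hij
  cases nonempty_fintype I
  cases nonempty_fintype J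
  obtain ⟨h, h', hh⟩ := hF (elem s t i j (B.e K (s i)))
  have h1 := congrArg (fun φ => character K (s i) (entry φ i j)) hh
  simp [entry_elem, ← hij, entry_add, entry_comp, character_e_self,
    character_entry_eq_zero hrange] at h1

end Disjoint

section Connected

open Classical in
/-- The projection to the summands with index in `S`. -/
noncomputable def summandProj (s : I → B.Vertex) (S : Set I) :
    B.ProjSum K s →ₗ[B.Alg K] B.ProjSum K s where
  toFun y i := if i ∈ S then y i else 0
  map_add' y z := by
    funext i
    by_cases h : i ∈ S <;> simp [h]
  map_smul' a y := by
    funext i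
    by_cases h : i ∈ S <;> simp [h]

lemma summandProj_apply_of_mem {S : Set I} {i : I} (h : i ∈ S) (y : B.ProjSum K s) :
    summandProj s S y i = y i := if_pos h

lemma summandProj_apply_of_notMem {S : Set I} {i : I} (h : i ∉ S) (y : B.ProjSum K s) :
    summandProj s S y i = 0 := if_neg h

lemma isIdempotentElem_summandProj (S : Set I) :
    IsIdempotentElem (summandProj (K := K) s S) := by
  refine LinearMap.ext fun y => funext fun i => ?_
  rw [Module.End.mul_apply]
  by_cases h : i ∈ S
  · rw [summandProj_apply_of_mem h]
  · rw [summandProj_apply_of_notMem h, summandProj_apply_of_notMem h]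

variable [Finite V]

lemma gen_ne_zero (x : B.Vertex) : gen K x ≠ 0 := by
  intro h
  have := congrArg (fun a : B.proj K x => character K x a) h
  simp [gen, character_e_self] at this

lemma eq_empty_of_summandProj_eq_zero {S : Set I} (h : summandProj (K := K) s S = 0) : S = ∅ := by
  classical
  rw [Set.eq_empty_iff_forall_notMem]
  intro i hi
  have h1 := congrFun (LinearMap.congr_fun h (Pi.single i (gen K (s i)))) i
  rw [summandProj_apply_of_mem hi, Pi.single_eq_same] at h1
  exact gen_ne_zero (s i) h1

lemma eq_univ_of_summandProj_eq_one {S : Set I} (h : summandProj (K := K) s S = 1) :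
    S = Set.univ := by
  classical
  rw [Set.eq_univ_iff_forall]
  intro i
  by_contra hi
  have h1 := congrFun (LinearMap.congr_fun h (Pi.single i (gen K (s i)))) i
  rw [summandProj_apply_of_notMem hi, Module.End.one_apply, Pi.single_eq_same] at h1
  exact gen_ne_zero (s i) h1.symm

variable [Fintype I] [Fintype J]

/-- The sources and sinks cannot be divided into two parts which respect the matching. -/
def Matching.IsConnected (m : Matching s t) : Prop :=
  ∀ (S : Set I) (S' : Set J), (∀ p i j, m.rel p i j → (i ∈ S ↔ j ∈ S')) →
    (S = ∅ ∧ S' = ∅) ∨ (S = Set.univ ∧ S' = Set.univ)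

omit [Finite V] in
lemma Matching.summandProj_comp_map (m : Matching s t) {S : Set I} {S' : Set J}
    (hS : ∀ p i j, m.rel p i j → (i ∈ S ↔ j ∈ S')) :
    summandProj t S' ∘ₗ m.map K = m.map K ∘ₗ summandProj s S := by
  refine LinearMap.ext fun y => funext fun j => Subtype.ext ?_
  rw [LinearMap.comp_apply, LinearMap.comp_apply, apply_eq_sum (m.map K) (summandProj s S y)]
  by_cases hj : j ∈ S'
  · rw [summandProj_apply_of_mem hj, apply_eq_sum]
    refine Finset.sum_congr rfl fun i _ => ?_
    by_cases hi : i ∈ S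
    · rw [summandProj_apply_of_mem hi]
    · rw [m.entry_map_of_not (fun ⟨p, hp⟩ => hi ((hS p i j hp).2 hj)), mul_zero, mul_zero]
  · rw [summandProj_apply_of_notMem hj]
    refine (Finset.sum_eq_zero fun i _ => ?_).symm
    by_cases hi : i ∈ S
    · rw [m.entry_map_of_not (fun ⟨p, hp⟩ => hj ((hS p i j hp).1 hi)), mul_zero]
    · rw [summandProj_apply_of_notMem hi, ZeroMemClass.coe_zero, zero_mul]

lemma Matching.isConnected (m : Matching s t) {M : ModuleCat.{w} (B.Alg K)} (hM : Indecomposable M)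
    {F : B.ProjSum K s →ₗ[B.Alg K] B.ProjSum K t} {π : B.ProjSum K t →ₗ[B.Alg K] M}
    (hπ : Function.Surjective π)
    (hFπ : LinearMap.range F = LinearMap.ker π) (hrange : Superfluous (LinearMap.range F))
    (hker : Superfluous (LinearMap.ker F)) {f : B.ProjSum K s ≃ₗ[B.Alg K] B.ProjSum K s}
    {g : B.ProjSum K t ≃ₗ[B.Alg K] B.ProjSum K t}
    (hfg : g.toLinearMap ∘ₗ F = m.map K ∘ₗ f.toLinearMap) : m.IsConnected := by
  intro S S' hS
  have hcomm : (g.symm.conjRingEquiv (summandProj t S')) ∘ₗ F =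
      F ∘ₗ f.symm.conjRingEquiv (summandProj s S) := by
    refine LinearMap.ext fun y => g.injective ?_
    have hfg' (y : B.ProjSum K s) : g (F y) = m.map K (f y) := LinearMap.congr_fun hfg y
    have h := LinearMap.congr_fun (m.summandProj_comp_map (K := K) hS) (f y)
    simpa [hfg'] using h
  rcases eq_zero_or_eq_one_of_minimal_presentation hM hπ hFπ hrange hker
    ((isIdempotentElem_summandProj S).map f.symm.conjRingEquiv)
    ((isIdempotentElem_summandProj S').map g.symm.conjRingEquiv) hcomm with ⟨ha, hb⟩ | ⟨ha, hb⟩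
  · rw [EmbeddingLike.map_eq_zero_iff] at ha hb
    exact Or.inl ⟨eq_empty_of_summandProj_eq_zero ha, eq_empty_of_summandProj_eq_zero hb⟩
  · rw [EmbeddingLike.map_eq_one_iff] at ha hb
    exact Or.inr ⟨eq_univ_of_summandProj_eq_one ha, eq_univ_of_summandProj_eq_one hb⟩

end Connected

namespace Matching

variable [Fintype I] [Fintype J] (m : Matching s t)

/-- The matching as a symmetric relation on the disjoint union of sources and sinks. -/
def Link (p : V) : I ⊕ J → I ⊕ J → Prop
  | .inl i, .inr j => m.rel p i j
  | .inr j, .inl i => m.rel p i j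
  | .inl _, .inl _ => False
  | .inr _, .inr _ => False

variable {m}

lemma Link.symm {p : V} {y z : I ⊕ J} (h : m.Link p y z) : m.Link p z y := by
  rcases y with i | j <;> rcases z with i' | j' <;> exact h

lemma Link.mem_left {p : V} {y z : I ⊕ J} (h : m.Link p y z) : p ∈ (Sum.elim s t y).1 := by
  rcases y with i | j <;> rcases z with i' | j'
  · exact h.elim
  · exact m.mem_left h
  · exact m.mem_right h
  · exact h.elim

lemma Link.unique {p : V} {y z z' : I ⊕ J} (h : m.Link p y z) (h' : m.Link p y z') : z = z' := by
  rcases y with i | j <;> rcases z with i' | j' <;> rcases z' with i'' | j''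
  · exact h.elim
  · exact h.elim
  · exact h'.elim
  · exact congrArg _ (m.right_unique h h')
  · exact congrArg _ (m.left_unique h h')
  · exact h'.elim
  · exact h.elim
  · exact h.elim

lemma Link.edge_ne (hst : ∀ i j, s i ≠ t j) {p : V} {y z : I ⊕ J} (h : m.Link p y z) :
    Sum.elim s t y ≠ Sum.elim s t z := by
  rcases y with i | j <;> rcases z with i' | j'
  · exact h.elim
  · exact hst i j'
  · exact (hst i' j).symm
  · exact h.elim

lemma IsConnected.forall_mem (hm : m.IsConnected) {Z : Set (I ⊕ J)}
    (hZ : ∀ p y z, m.Link p y z → y ∈ Z → z ∈ Z) {y : I ⊕ J} (hy : y ∈ Z) (z : I ⊕ J) :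
    z ∈ Z := by
  rcases hm {i | Sum.inl i ∈ Z} {j | Sum.inr j ∈ Z} (fun p i j h =>
    ⟨hZ p (.inl i) (.inr j) h, hZ p (.inr j) (.inl i) h⟩) with ⟨h1, h2⟩ | ⟨h1, h2⟩
  · rcases y with i | j
    · exact absurd hy (Set.eq_empty_iff_forall_notMem.1 h1 i)
    · exact absurd hy (Set.eq_empty_iff_forall_notMem.1 h2 j)
  · rcases z with i | j
    · exact Set.eq_univ_iff_forall.1 h1 i
    · exact Set.eq_univ_iff_forall.1 h2 j

variable (m) in
/-- One step along the matching: an element together with a direction of its edge is followed by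
the element which is linked to it at the end of the edge. -/
structure Step (a b : B.Arrow × (I ⊕ J)) : Prop where
  source_left : B.source a.1 = Sum.elim s t a.2
  source_right : B.source b.1 = Sum.elim s t b.2
  fst_eq : b.1.fst = a.1.snd
  link : m.Link a.1.snd a.2 b.2

lemma Link.exists_step {a : B.Arrow × (I ⊕ J)} (ha : B.source a.1 = Sum.elim s t a.2)
    {z : I ⊕ J} (h : m.Link a.1.snd a.2 z) : ∃ d, m.Step a (d, z) := by
  obtain ⟨d, hd, hfst⟩ := exists_source_eq_fst_eq h.symm.mem_left
  exact ⟨d, ha, hd, hfst, h⟩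

lemma Step.branch_subset (hst : ∀ i j, s i ≠ t j) {a b : B.Arrow × (I ⊕ J)} (h : m.Step a b) :
    branch b.1 ⊆ branch a.1 := by
  refine _root_.branch_subset B.isTree h.fst_eq fun h' => ?_
  have h1 := h.source_right
  rw [h', source_symm, h.source_left] at h1
  exact h.link.edge_ne hst h1

lemma branch_subset_of_transGen (hst : ∀ i j, s i ≠ t j) {a b : B.Arrow × (I ⊕ J)}
    (h : Relation.TransGen m.Step a b) : branch b.1 ⊆ branch a.1 ∧ b.1.fst ∈ branch a.1 := by
  induction h with
  | single h => exact ⟨h.branch_subset hst, h.fst_eq ▸ snd_mem_branch B.isTree _⟩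
  | tail _ h ih =>
    exact ⟨(h.branch_subset hst).trans ih.1, h.fst_eq ▸ ih.1 (snd_mem_branch B.isTree _)⟩

lemma fst_notMem_of_transGen (hst : ∀ i j, s i ≠ t j) {a b : B.Arrow × (I ⊕ J)}
    (h : Relation.TransGen m.Step a b) : a.1.fst ∉ (Sum.elim s t b.2).1 := by
  obtain ⟨hsub, hfst⟩ := branch_subset_of_transGen hst h
  obtain ⟨_, _, hlast⟩ := Relation.TransGen.tail'_iff.1 h
  rw [← hlast.source_right, mem_source_iff]
  rintro (h | h)
  · exact fst_notMem_branch _ (h ▸ hfst)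
  · exact fst_notMem_branch _ (h ▸ hsub (snd_mem_branch B.isTree b.1))

variable (m) in
/-- The element `z` is reached from `y` by walking along the matching in one of the two
directions. -/
def Reaches (y z : I ⊕ J) : Prop :=
  ∃ d d', B.source d = Sum.elim s t y ∧ B.source d' = Sum.elim s t z ∧
    Relation.ReflTransGen m.Step (d, y) (d', z)

lemma Reaches.of_link {y z z' : I ⊕ J} {q : V} (h : m.Reaches y z) (hl : m.Link q z z') :
    m.Reaches y z' := by
  obtain ⟨d, d', hd, hd', h⟩ := h
  have hq := hl.mem_left
  rw [← hd', mem_source_iff] at hq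
  rcases hq with rfl | rfl
  · rcases Relation.ReflTransGen.cases_tail h with heq | ⟨b, hb, hstep⟩
    · obtain ⟨rfl, rfl⟩ := Prod.mk.inj heq
      have hd_symm := (source_symm d').trans hd
      obtain ⟨d'', hs⟩ := Link.exists_step (a := (d'.symm, z)) hd_symm hl
      exact ⟨d'.symm, d'', hd_symm, hs.source_right, .single hs⟩
    · obtain rfl := (hstep.fst_eq ▸ hstep.link).symm.unique hl
      exact ⟨d, b.1, hd, hstep.source_left, hb⟩
  · obtain ⟨d'', hs⟩ := Link.exists_step (a := (d', z)) hd' hl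
    exact ⟨d, d'', hd, hs.source_right, h.tail hs⟩

-- Walking along the matching away from `p`, the branches only shrink, so `p` is not met again.
theorem IsConnected.link (hst : ∀ i j, s i ≠ t j) (hm : m.IsConnected) {p : V} {y z : I ⊕ J}
    (hyz : y ≠ z) (hy : p ∈ (Sum.elim s t y).1) (hz : p ∈ (Sum.elim s t z).1) : m.Link p y z := by
  obtain ⟨d₀, hd₀, -⟩ := exists_source_eq_fst_eq hy
  obtain ⟨d, d', hd, -, h⟩ : m.Reaches y z :=
    hm.forall_mem (Z := {z | m.Reaches y z}) (fun _ _ _ hl h => h.of_link hl)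
      ⟨d₀, d₀, hd₀, hd₀, .refl⟩ z
  rw [← hd, mem_source_iff] at hy
  rcases hy with rfl | rfl
  · rcases Relation.reflTransGen_iff_eq_or_transGen.1 h with h | h
    · exact absurd (congrArg Prod.snd h).symm hyz
    · exact absurd hz (fst_notMem_of_transGen hst h)
  · rcases Relation.ReflTransGen.cases_head h with h | ⟨b, hb, h⟩
    · exact absurd (congrArg Prod.snd h) hyz
    · rcases Relation.reflTransGen_iff_eq_or_transGen.1 h with rfl | h
      · exact hb.link
      · exact absurd (hb.fst_eq ▸ hz) (fst_notMem_of_transGen hst h)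

theorem IsConnected.exists_edge_eq (hm : m.IsConnected) {x : B.Vertex} {p q : V} (hpq : p ≠ q)
    (hp : p ∈ x.1) (hq : q ∈ x.1) {y z : I ⊕ J} (hy : p ∈ (Sum.elim s t y).1)
    (hz : q ∈ (Sum.elim s t z).1) : ∃ y', Sum.elim s t y' = x := by
  by_contra! hcon
  have hx : x.1 = s(p, q) := (Sym2.mem_and_mem_iff hpq).1 ⟨hp, hq⟩
  have hadj : B.graph.Adj p q := by
    have := x.2
    rw [hx] at this
    exact this
  have hbridge := SimpleGraph.isAcyclic_iff_forall_adj_isBridge.1 B.isTree.isAcyclic hadj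
  rw [SimpleGraph.isBridge_iff] at hbridge
  have hside (y : I ⊕ J) {r r' : V} (hr : r ∈ (Sum.elim s t y).1)
      (hr' : r' ∈ (Sum.elim s t y).1) (h : (B.graph.deleteEdges {s(p, q)}).Reachable p r) :
      (B.graph.deleteEdges {s(p, q)}).Reachable p r' := by
    by_cases hrr : r = r'
    · rwa [← hrr]
    · refine h.trans (SimpleGraph.Adj.reachable ?_)
      have h1 := (Sym2.mem_and_mem_iff hrr).1 ⟨hr, hr'⟩
      rw [SimpleGraph.deleteEdges_adj, Set.mem_singleton_iff]
      refine ⟨?_, fun h2 => hcon y (Subtype.ext (h1.trans (h2.trans hx.symm)))⟩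
      have := (Sum.elim s t y).2
      rw [h1] at this
      exact this
  have := hm.forall_mem (Z := {y | ∀ r ∈ (Sum.elim s t y).1,
    (B.graph.deleteEdges {s(p, q)}).Reachable p r})
    (fun r y z hl hy r' hr' => hside z hl.symm.mem_left hr' (hy r hl.mem_left))
    (y := y) (fun r hr => hside y hy hr .rfl) z q hz
  exact hbridge this

lemma IsConnected.exists_rel_source [Nonempty J] (hm : m.IsConnected) (i : I) :
    ∃ j p, m.rel p i j := by
  by_contra! hcon
  have hS (p : V) (i' : I) (j : J) (h : m.rel p i' j) : i' ∈ ({i} : Set I) ↔ j ∈ (∅ : Set J) :=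
    iff_of_false (fun hi => hcon j p (Set.mem_singleton_iff.1 hi ▸ h)) (Set.notMem_empty j)
  rcases hm {i} ∅ hS with h | h
  · exact Set.singleton_ne_empty i h.1
  · exact Set.empty_ne_univ h.2

lemma IsConnected.exists_rel_sink [Nonempty I] (hm : m.IsConnected) (j : J) :
    ∃ i p, m.rel p i j := by
  by_contra! hcon
  have hS (p : V) (i : I) (j' : J) (h : m.rel p i j') : i ∈ (∅ : Set I) ↔ j' ∈ ({j} : Set J) :=
    iff_of_false (Set.notMem_empty i) fun hj => hcon i p (Set.mem_singleton_iff.1 hj ▸ h)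
  rcases hm ∅ {j} hS with h | h
  · exact Set.singleton_ne_empty j h.2
  · exact Set.empty_ne_univ h.1

end Matching

/-- The edges of the sources and sinks form a path in the tree on which sources and sinks
alternate, and the entries of the homomorphism at neighbouring places are nonzero. -/
structure IsZigzag (F : B.ProjSum K s →ₗ[B.Alg K] B.ProjSum K t) : Prop where
  source_ne_sink : ∀ i j, s i ≠ t j
  source_unique : ∀ {p i i'}, p ∈ (s i).1 → p ∈ (s i').1 → i = i'
  sink_unique : ∀ {p j j'}, p ∈ (t j).1 → p ∈ (t j').1 → j = j'
  entry_ne_zero : ∀ {p i j}, p ∈ (s i).1 → p ∈ (t j).1 → entry F i j ≠ 0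
  exists_sink : ∀ i, ∃ j p, p ∈ (s i).1 ∧ p ∈ (t j).1
  exists_source : ∀ j, ∃ i p, p ∈ (s i).1 ∧ p ∈ (t j).1
  exists_edge_eq : ∀ {x : B.Vertex} {p q : V} {i i' : I}, p ≠ q → p ∈ x.1 → q ∈ x.1 →
    p ∈ (s i).1 → q ∈ (s i').1 → (∃ i'', s i'' = x) ∨ ∃ j, t j = x

lemma elem_comp_eq_elem [Fintype I] [Fintype J] {F : B.ProjSum K s →ₗ[B.Alg K] B.ProjSum K t}
    {x : B.Vertex} {i : I} {j : J} {a : B.Alg K} (h : ∀ i', i' ≠ i → entry F i' j * a = 0) :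
    elem t (fun _ : Unit => x) j () a ∘ₗ F = elem s (fun _ => x) i () (entry F i j * a) := by
  rw [elem_comp, Fintype.sum_eq_single i fun i' hi' => by rw [h i' hi', elem_zero]]

variable [Finite V]

lemma entry_eq_zero {F : B.ProjSum K s →ₗ[B.Alg K] B.ProjSum K t} {i : I} {j : J}
    (h : ∀ p, p ∈ (s i).1 → p ∉ (t j).1) : entry F i j = 0 := by
  rw [← e_mul_entry_mul_e, corner_eq_zero h]

lemma exists_entry_eq_smul (F : B.ProjSum K s →ₗ[B.Alg K] B.ProjSum K t) {p : V} {i : I} {j : J}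
    (hi : p ∈ (s i).1) (hj : p ∈ (t j).1) (hij : s i ≠ t j) :
    ∃ c : K, entry F i j = c • pth K p (s i) (t j) :=
  e_mul_entry_mul_e F i j ▸ exists_corner_eq_smul hi hj hij (entry F i j)

lemma exists_mem_of_entry_ne_zero {F : B.ProjSum K s →ₗ[B.Alg K] B.ProjSum K t} {i : I} {j : J}
    (h : entry F i j ≠ 0) : ∃ p, p ∈ (s i).1 ∧ p ∈ (t j).1 := by
  by_contra! hcon
  exact h (entry_eq_zero hcon)

lemma entry_comp_comp_of_disjoint [Finite I] [Finite J]
    (hs : ∀ {p i i'}, p ∈ (s i).1 → p ∈ (s i').1 → i = i')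
    (ht : ∀ {p j j'}, p ∈ (t j).1 → p ∈ (t j').1 → j = j')
    (g : B.ProjSum K t →ₗ[B.Alg K] B.ProjSum K t) (F : B.ProjSum K s →ₗ[B.Alg K] B.ProjSum K t)
    (f : B.ProjSum K s →ₗ[B.Alg K] B.ProjSum K s) (i : I) (j : J) :
    entry (g ∘ₗ F ∘ₗ f) i j = entry f i i * entry F i j * entry g j j := by
  cases nonempty_fintype I
  cases nonempty_fintype J
  have hf (i' : I) (h : i' ≠ i) : entry f i i' = 0 := entry_eq_zero fun p hp hp' => h (hs hp' hp)
  have hg (j' : J) (h : j' ≠ j) : entry g j' j = 0 := entry_eq_zero fun p hp hp' => h (ht hp hp')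
  rw [entry_comp, Fintype.sum_eq_single j fun j' h => by rw [hg j' h, mul_zero], entry_comp,
    Fintype.sum_eq_single i fun i' h => by rw [hf i' h, zero_mul]]

theorem _root_.IsRigid.isZigzag [Infinite K] [Finite I] [Finite J]
    {F : B.ProjSum K s →ₗ[B.Alg K] B.ProjSum K t} (hF : IsRigid F)
    {M : ModuleCat.{w} (B.Alg K)} (hM : Indecomposable M)
    {π : B.ProjSum K t →ₗ[B.Alg K] M} (hπ : Function.Surjective π)
    (hFπ : LinearMap.range F = LinearMap.ker π) (hrange : Superfluous (LinearMap.range F))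
    (hker : Superfluous (LinearMap.ker F)) [Nonempty I] [Nonempty J] : IsZigzag F := by
  cases nonempty_fintype I
  cases nonempty_fintype J
  have hst := hF.source_ne_sink hrange
  obtain ⟨m⟩ := nonempty_matching s t
  obtain ⟨f, g, hfg⟩ := hF.exists_equiv K (m.isRigid_map (K := K) hst)
  have hm := m.isConnected hM hπ hFπ hrange hker hfg
  have hs {p i i'} (h : p ∈ (s i).1) (h' : p ∈ (s i').1) : i = i' := by
    by_contra hne
    exact hm.link hst (y := .inl i) (z := .inl i') (by simpa using hne) h h'
  have ht {p j j'} (h : p ∈ (t j).1) (h' : p ∈ (t j').1) : j = j' := by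
    by_contra hne
    exact hm.link hst (y := .inr j) (z := .inr j') (by simpa using hne) h h'
  have hmap : g.toLinearMap ∘ₗ F ∘ₗ f.symm.toLinearMap = m.map K := by
    rw [← LinearMap.comp_assoc, hfg, LinearMap.comp_assoc, LinearEquiv.comp_symm, LinearMap.comp_id]
  refine ⟨hst, hs, ht, ?_, ?_, ?_, ?_⟩
  · intro p i j hi hj h0
    have hrel : m.rel p i j := hm.link hst (y := .inl i) (z := .inr j) (by simp) hi hj
    have hentry := entry_comp_comp_of_disjoint hs ht g.toLinearMap F f.symm.toLinearMap i j
    rw [hmap, m.entry_map_of_rel hst hrel, h0, mul_zero, zero_mul] at hentry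
    exact pth_ne_zero hi hj hentry
  · intro i
    obtain ⟨j, p, h⟩ := hm.exists_rel_source i
    exact ⟨j, p, m.mem_left h, m.mem_right h⟩
  · intro j
    obtain ⟨i, p, h⟩ := hm.exists_rel_sink j
    exact ⟨i, p, m.mem_left h, m.mem_right h⟩
  · intro x p q i i' hpq hp hq hi hi'
    obtain ⟨i'' | j, hy⟩ := hm.exists_edge_eq hpq hp hq (y := .inl i) (z := .inl i') hi hi'
    · exact Or.inl ⟨i'', hy⟩
    · exact Or.inr ⟨j, hy⟩

/-- Every homomorphism to the indecomposable projective module of `x` factors through `F`. The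
target is written as a sum over `Unit` so that homomorphisms to it have entries. -/
def Factors (F : B.ProjSum K s →ₗ[B.Alg K] B.ProjSum K t) (x : B.Vertex) : Prop :=
  ∀ φ : B.ProjSum K s →ₗ[B.Alg K] B.ProjSum K (fun _ : Unit => x),
    ∃ b : B.ProjSum K t →ₗ[B.Alg K] B.ProjSum K (fun _ : Unit => x), φ = b ∘ₗ F

lemma factors_of_elem [Fintype I] {F : B.ProjSum K s →ₗ[B.Alg K] B.ProjSum K t} {x : B.Vertex}
    (h : ∀ i p, p ∈ (s i).1 → p ∈ x.1 → ∃ b : B.ProjSum K t →ₗ[B.Alg K] B.ProjSum K fun _ => x,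
      elem s (fun _ : Unit => x) i () (pth K p (s i) x) = b ∘ₗ F) (hx : ∀ i, s i ≠ x) :
    Factors F x := by
  intro φ
  have h' (i : I) : ∃ b : B.ProjSum K t →ₗ[B.Alg K] B.ProjSum K fun _ => x,
      elem s (fun _ : Unit => x) i () (entry φ i ()) = b ∘ₗ F := by
    by_cases hp : ∃ p, p ∈ (s i).1 ∧ p ∈ x.1
    · obtain ⟨p, hi, hp⟩ := hp
      obtain ⟨c, hc⟩ := exists_entry_eq_smul φ (j := ()) hi hp (hx i)
      obtain ⟨b, hb⟩ := h i p hi hp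
      exact ⟨c • b, by rw [hc, elem_smul, hb]; rfl⟩
    · exact ⟨0, by rw [entry_eq_zero fun p hi hp' => hp ⟨p, hi, hp'⟩, elem_zero,
        LinearMap.zero_comp]⟩
  choose b hb using h'
  refine ⟨∑ i, b i, ?_⟩
  rw [← sum_elem_entry φ]
  ext
  simp [hb, LinearMap.sum_apply]

lemma not_factors_source [Finite I] [Finite J] {F : B.ProjSum K s →ₗ[B.Alg K] B.ProjSum K t}
    (hrange : Superfluous (LinearMap.range F)) (i : I) : ¬ Factors F (s i) := by
  intro h
  cases nonempty_fintype I
  cases nonempty_fintype J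
  obtain ⟨b, hb⟩ := h (elem s (fun _ => s i) i () (B.e K (s i)))
  have h1 := congrArg (fun φ => character K (s i) (entry φ i ())) hb
  simp [entry_elem, entry_comp, character_e_self, character_entry_eq_zero hrange] at h1

namespace IsZigzag

variable {F : B.ProjSum K s →ₗ[B.Alg K] B.ProjSum K t}

lemma exists_entry_eq {p : V} {i : I} {j : J} (hF : IsZigzag F) (hi : p ∈ (s i).1)
    (hj : p ∈ (t j).1) : ∃ c : K, c ≠ 0 ∧ entry F i j = c • pth K p (s i) (t j) := by
  obtain ⟨c, hc⟩ := exists_entry_eq_smul F hi hj (hF.source_ne_sink i j)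
  refine ⟨c, ?_, hc⟩
  rintro rfl
  exact hF.entry_ne_zero hi hj (hc.trans (zero_smul K _))

lemma entry_comp_sink [Finite J] (hF : IsZigzag F) {j : J}
    (b : B.ProjSum K t →ₗ[B.Alg K] B.ProjSum K (fun _ : Unit => t j)) {p : V} {i : I}
    (hi : p ∈ (s i).1) (hj : p ∈ (t j).1) :
    entry (b ∘ₗ F) i () = character K (t j) (entry b j ()) • entry F i j := by
  cases nonempty_fintype J
  have hb (j' : J) (hj' : j' ≠ j) : entry b j' () = 0 :=
    entry_eq_zero fun r hr hr' => hj' (hF.sink_unique hr hr')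
  obtain ⟨c, -, hc⟩ := hF.exists_entry_eq hi hj
  rw [entry_comp, Fintype.sum_eq_single j fun j' hj' => by rw [hb j' hj', mul_zero], hc,
    smul_mul_assoc, ← e_mul_entry_mul_e b j (), pth_mul_corner hi hj (hF.source_ne_sink i j),
    smul_comm, e_mul_entry_mul_e]

lemma not_factors_sink [Finite I] [Finite J] (hF : IsZigzag F) {j : J} {p q : V} {i i' : I}
    (hpq : p ≠ q) (hp : p ∈ (t j).1) (hq : q ∈ (t j).1) (hi : p ∈ (s i).1) (hi' : q ∈ (s i').1) :
    ¬ Factors F (t j) := by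
  cases nonempty_fintype I
  intro h
  have hst := hF.source_ne_sink
  have hne : i' ≠ i := by
    rintro rfl
    exact hpq (eq_of_mem_of_mem (hst i' j) hi hp hi' hq)
  obtain ⟨b, hb⟩ := h (elem s (fun _ => t j) i () (pth K p (s i) (t j)))
  have hχ : character K (t j) (entry b j ()) = 0 := by
    have h0 := hF.entry_comp_sink b hi' hq
    rw [← hb, entry_elem, if_neg fun h => hne h.1] at h0
    exact (smul_eq_zero.1 h0.symm).resolve_right (hF.entry_ne_zero hi' hq)
  have h1 := hF.entry_comp_sink b hi hp
  rw [← hb, entry_elem, if_pos ⟨rfl, rfl⟩, hχ, zero_smul, e_mul_pth hi hp (hst i j),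
    pth_mul_e hi hp (hst i j)] at h1
  exact pth_ne_zero hi hp h1

lemma factors_sink [Finite I] [Finite J] (hF : IsZigzag F) {j : J}
    (h : ∀ {p q : V} {i i' : I}, p ∈ (t j).1 → q ∈ (t j).1 → p ∈ (s i).1 → q ∈ (s i').1 → p = q) :
    Factors F (t j) := by
  cases nonempty_fintype I
  cases nonempty_fintype J
  refine factors_of_elem (fun i p hi hp => ?_) (fun i => hF.source_ne_sink i j)
  obtain ⟨c, hc, hc'⟩ := hF.exists_entry_eq hi hp
  refine ⟨elem t (fun _ => t j) j () (c⁻¹ • B.e K (t j)), ?_⟩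
  rw [elem_comp_eq_elem (i := i), mul_smul_comm, entry_mul_e, hc', inv_smul_smul₀ hc]
  intro i' hi'
  rw [entry_eq_zero fun q hq hq' => hi' (hF.source_unique (h hp hq' hi hq ▸ hq) hi), zero_mul]

lemma mem_and_len_le_of_entry_mul_ne_zero (hF : IsZigzag F) {x : B.Vertex}
    {b : B.ProjSum K t →ₗ[B.Alg K] B.ProjSum K (fun _ : Unit => x)} {p : V} {i : I} {j : J}
    (hx : s i ≠ x) (ht : t j ≠ x) (hi : p ∈ (s i).1) (hp : p ∈ x.1)
    (h : entry F i j * entry b j () ≠ 0) : p ∈ (t j).1 ∧ len p (s i) (t j) ≤ len p (s i) x := by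
  obtain ⟨r, hri, hrj⟩ := exists_mem_of_entry_ne_zero (left_ne_zero_of_mul h)
  obtain ⟨r', hrj', hrx⟩ := exists_mem_of_entry_ne_zero (right_ne_zero_of_mul h)
  obtain ⟨c, -, hc⟩ := hF.exists_entry_eq hri hrj
  obtain ⟨c', hc'⟩ := exists_entry_eq_smul b hrj' hrx ht
  have hmul : pth K r (s i) (t j) * pth K r' (t j) x ≠ 0 := fun h0 =>
    h (by rw [hc, hc', smul_mul_assoc, mul_smul_comm, h0, smul_zero, smul_zero])
  obtain rfl : r = r' := by
    by_contra hne
    exact hmul (pth_mul_pth_of_ne hne (hF.source_ne_sink i j) ht hri hrj hrj' hrx)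
  obtain rfl := eq_of_mem_of_mem hx hi hp hri hrx
  refine ⟨hrj, ?_⟩
  by_contra! hlt
  exact hmul (pth_mul_pth_eq_zero hi hrj hp hx hlt)

lemma entry_mul_pth_eq_zero (hF : IsZigzag F) {x : B.Vertex} {p : V} {i i' : I} {j : J}
    (hi : p ∈ (s i).1) (hj : p ∈ (t j).1) (hp : p ∈ x.1) (ht : t j ≠ x) (hne : i' ≠ i) :
    entry F i' j * pth K p (t j) x = 0 := by
  by_cases hr : ∃ r, r ∈ (s i').1 ∧ r ∈ (t j).1
  · obtain ⟨r, hri, hrj⟩ := hr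
    obtain ⟨c, -, hc⟩ := hF.exists_entry_eq hri hrj
    have hrp : r ≠ p := by
      rintro rfl
      exact hne (hF.source_unique hri hi)
    rw [hc, smul_mul_assoc, pth_mul_pth_of_ne hrp (hF.source_ne_sink i' j) ht hri hrj hj hp,
      smul_zero]
  · rw [entry_eq_zero fun r hri hrj => hr ⟨r, hri, hrj⟩, zero_mul]

lemma factors_iff_of_unmarked [Finite I] [Finite J] (hF : IsZigzag F) {x : B.Vertex}
    (hs : ∀ i, s i ≠ x) (ht : ∀ j, t j ≠ x) :
    Factors F x ↔ ∀ p i, p ∈ x.1 → p ∈ (s i).1 →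
      ∃ j, p ∈ (t j).1 ∧ len p (s i) (t j) ≤ len p (s i) x := by
  cases nonempty_fintype I
  cases nonempty_fintype J
  constructor
  · intro h p i hp hi
    obtain ⟨b, hb⟩ := h (elem s (fun _ => x) i () (pth K p (s i) x))
    have h1 : pth K p (s i) x = ∑ j, entry F i j * entry b j () := by
      rw [← entry_comp, ← hb, entry_elem, if_pos ⟨rfl, rfl⟩, e_mul_pth hi hp (hs i),
        pth_mul_e hi hp (hs i)]
    obtain ⟨j, -, hj⟩ := Finset.exists_ne_zero_of_sum_ne_zero (h1 ▸ pth_ne_zero hi hp)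
    exact ⟨j, hF.mem_and_len_le_of_entry_mul_ne_zero (hs i) (ht j) hi hp hj⟩
  · intro h
    refine factors_of_elem (fun i p hi hp => ?_) hs
    obtain ⟨j, hj, hl⟩ := h p i hp hi
    obtain ⟨c, hc, hc'⟩ := hF.exists_entry_eq hi hj
    refine ⟨elem t (fun _ => x) j () (c⁻¹ • pth K p (t j) x), ?_⟩
    rw [elem_comp_eq_elem (i := i), mul_smul_comm, hc', smul_mul_assoc, pth_mul_pth hi hj hp hl,
      inv_smul_smul₀ hc]
    intro i' hi'
    rw [mul_smul_comm, hF.entry_mul_pth_eq_zero hi hj hp (ht j) hi', smul_zero]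

end IsZigzag

end BrauerTree

namespace BrauerTree

namespace Decomposition

variable {V : Type v} {B : BrauerTree V} {K : Type u} [Field K] {T : B.Cplx K}
  (D : Decomposition T)

/-- The differential of `T` as a homomorphism between sums of indecomposable projective modules. -/
noncomputable def map : B.ProjSum K D.src →ₗ[B.Alg K] B.ProjSum K D.snk :=
  D.iso₁.toLinearMap ∘ₗ (T.d 0 1).hom ∘ₗ D.iso₀.symm.toLinearMap

lemma map_apply (y : B.ProjSum K D.src) : D.map y = D.iso₁ ((T.d 0 1).hom (D.iso₀.symm y)) := rfl

variable {D}

lemma component_ne_zero_iff {i : D.I} {j : D.J} : D.component i j ≠ 0 ↔ entry D.map i j ≠ 0 := by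
  classical
  have h : ((D.component i j (gen K (D.src i)) : B.proj K (D.snk j)) : B.Alg K) =
      entry D.map i j := by
    simp only [component, entry, map_apply, LinearMap.comp_apply, LinearMap.proj_apply,
      LinearEquiv.coe_coe, LinearMap.single_apply]
  refine not_congr ⟨fun h0 => by rw [← h, h0]; rfl, fun h0 => LinearMap.ext fun y => ?_⟩
  have h1 : D.component i j (gen K (D.src i)) = 0 := Subtype.ext (h.trans h0)
  rw [← smul_gen y, map_smul, h1, smul_zero, LinearMap.zero_apply]

variable [Finite V]

lemma hasArrow_iff (hF : IsZigzag D.map) {d : B.Arrow} :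
    D.HasArrow d ↔ ∃ i j p k, p ∈ (D.src i).1 ∧ p ∈ (D.snk j).1 ∧
      k < len p (D.src i) (D.snk j) ∧ d = B.next^[k] (dartAt p (D.src i)) := by
  constructor
  · rintro ⟨i, j, -, l, hl, hl0, hd⟩
    obtain ⟨p, hi, hj, rfl⟩ := IsPath.eq_pth (hF.source_ne_sink i j) hl hl0
    obtain ⟨k, hk, rfl⟩ := mem_iterate_iff.1 hd
    exact ⟨i, j, p, k, hi, hj, hk, rfl⟩
  · rintro ⟨i, j, p, k, hi, hj, hk, rfl⟩
    exact ⟨i, j, component_ne_zero_iff.2 (hF.entry_ne_zero hi hj), _, isPath_pth hi hj,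
      pth_ne_zero hi hj, mem_iterate_iff.2 ⟨k, hk, rfl⟩⟩

lemma incident_iff (hF : IsZigzag D.map) {d : B.Arrow} {x : B.Vertex} :
    (D.HasArrow d ∧ (B.source d = x ∨ B.target d = x)) ↔
      ∃ i j p k, p ∈ (D.src i).1 ∧ p ∈ (D.snk j).1 ∧ p ∈ x.1 ∧
        k < len p (D.src i) (D.snk j) ∧ d = B.next^[k] (dartAt p (D.src i)) ∧
        (k = len p (D.src i) x ∨ k + 1 = len p (D.src i) x) := by
  rw [hasArrow_iff hF]
  constructor
  · rintro ⟨⟨i, j, p, k, hi, hj, hk, rfl⟩, hx⟩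
    have hdeg := len_lt_deg hi hj
    rcases hx with h | h
    · obtain ⟨hp, hl⟩ := mem_and_eq_len_of_source_iterate_eq hi (by lia) h
      exact ⟨i, j, p, k, hi, hj, hp, hk, rfl, Or.inl hl⟩
    · rw [target, ← Function.iterate_succ_apply' (f := B.next)] at h
      obtain ⟨hp, hl⟩ := mem_and_eq_len_of_source_iterate_eq hi (by lia) h
      exact ⟨i, j, p, k, hi, hj, hp, hk, rfl, Or.inr hl⟩
  · rintro ⟨i, j, p, k, hi, hj, hp, hk, rfl, hl⟩
    refine ⟨⟨i, j, p, k, hi, hj, hk, rfl⟩, hl.imp (fun h => ?_) fun h => ?_⟩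
    · rw [h, iterate_len hi hp, source_dartAt]
    · rw [target, ← Function.iterate_succ_apply' (f := B.next), Nat.succ_eq_add_one, h,
        iterate_len hi hp, source_dartAt]

lemma isEndPoint_snk_iff (hF : IsZigzag D.map) {j : D.J} :
    D.IsEndPoint (D.snk j) ↔ ∀ {p q : V} {i i' : D.I}, p ∈ (D.snk j).1 → q ∈ (D.snk j).1 →
      p ∈ (D.src i).1 → q ∈ (D.src i').1 → p = q := by
  have hinc {d : B.Arrow} : (D.HasArrow d ∧ (B.source d = D.snk j ∨ B.target d = D.snk j)) ↔
      ∃ i p, p ∈ (D.src i).1 ∧ p ∈ (D.snk j).1 ∧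
        d = B.next^[len p (D.src i) (D.snk j) - 1] (dartAt p (D.src i)) := by
    rw [incident_iff hF]
    constructor
    · rintro ⟨i, j', p, k, hi, hj', hj, hk, rfl, hl⟩
      obtain rfl := hF.sink_unique hj hj'
      exact ⟨i, p, hi, hj, by rw [show k = len p (D.src i) (D.snk j) - 1 by omega]⟩
    · rintro ⟨i, p, hi, hj, rfl⟩
      have := len_pos hi hj (hF.source_ne_sink i j)
      exact ⟨i, j, p, _, hi, hj, hj, by omega, rfl, by omega⟩
  constructor
  · rintro ⟨d, -, hd⟩ p q i i' hp hq hi hi'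
    have h1 := hd _ (hinc.2 ⟨i, p, hi, hp, rfl⟩)
    have h2 := hd _ (hinc.2 ⟨i', q, hi', hq, rfl⟩)
    have h3 := congrArg (fun d => d.fst) (h1.trans h2.symm)
    simpa only [fst_iterate_next, fst_dartAt hi, fst_dartAt hi'] using h3
  · intro h
    obtain ⟨i, p, hi, hp⟩ := hF.exists_source j
    refine ⟨_, hinc.2 ⟨i, p, hi, hp, rfl⟩, fun d hd => ?_⟩
    obtain ⟨i', q, hi', hq, rfl⟩ := hinc.1 hd
    obtain rfl := h hp hq hi hi'
    rw [hF.source_unique hi hi']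

lemma isEndPoint_src (hF : IsZigzag D.map) {i : D.I} {p : V} (hi : p ∈ (D.src i).1)
    (hp : ∀ j, p ∉ (D.snk j).1) : D.IsEndPoint (D.src i) := by
  have hinc {d : B.Arrow} : (D.HasArrow d ∧ (B.source d = D.src i ∨ B.target d = D.src i)) ↔
      ∃ j q, q ∈ (D.src i).1 ∧ q ∈ (D.snk j).1 ∧ d = dartAt q (D.src i) := by
    rw [incident_iff hF]
    have h0 (q : V) : len q (D.src i) (D.src i) = 0 := steps_self _
    constructor
    · rintro ⟨i', j, q, k, hi', hj, hq, hk, rfl, hl⟩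
      obtain rfl := hF.source_unique hq hi'
      rw [h0] at hl
      obtain rfl : k = 0 := by omega
      exact ⟨j, q, hq, hj, rfl⟩
    · rintro ⟨j, q, hq, hj, rfl⟩
      exact ⟨i, j, q, 0, hq, hj, hq, len_pos hq hj (hF.source_ne_sink i j), rfl, Or.inl (h0 q).symm⟩
  obtain ⟨j, q, hq, hj⟩ := hF.exists_sink i
  refine ⟨_, hinc.2 ⟨j, q, hq, hj, rfl⟩, fun d hd => ?_⟩
  obtain ⟨j', r, hr, hj', rfl⟩ := hinc.1 hd
  have hpq : p ≠ q := fun h => hp j (h ▸ hj)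
  have hpr : p ≠ r := fun h => hp j' (h ▸ hj')
  have h1 := (Sym2.mem_and_mem_iff hpq).1 ⟨hi, hq⟩
  rw [h1, Sym2.mem_iff] at hr
  rw [hr.resolve_left hpr.symm]

lemma not_hasVertex_iff (hF : IsZigzag D.map) {x : B.Vertex} (hs : ∀ i, D.src i ≠ x)
    (ht : ∀ j, D.snk j ≠ x) :
    ¬ D.HasVertex x ↔ ∀ p i j, p ∈ x.1 → p ∈ (D.src i).1 → p ∈ (D.snk j).1 →
      len p (D.src i) (D.snk j) ≤ len p (D.src i) x := by
  simp only [HasVertex, hs, ht, exists_false, false_or, incident_iff hF]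
  constructor
  · intro h p i j hp hi hj
    by_contra! hlt
    exact h ⟨_, i, j, p, _, hi, hj, hp, hlt, rfl, Or.inl rfl⟩
  · rintro h ⟨d, i, j, p, k, hi, hj, hp, hk, -, hl⟩
    have h1 := h p i j hp hi hj
    have h2 : len p (D.src i) (D.snk j) = len p (D.src i) x := by omega
    have h3 := iterate_len hi hj
    rw [h2, iterate_len hi hp] at h3
    exact ht j (dartAt_injective h3).symm

lemma exists_isDegOneSource_iff (hF : IsZigzag D.map) {p : V} :
    (∃ y : B.Vertex, D.IsDegOneSource y ∧ p ∈ y.1 ∧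
      ∀ z : B.Vertex, D.HasVertex z → p ∈ z.1 → z = y) ↔
      (∃ i, p ∈ (D.src i).1) ∧ ∀ j, p ∉ (D.snk j).1 := by
  constructor
  · rintro ⟨_, ⟨⟨i, rfl⟩, -⟩, hi, hy⟩
    exact ⟨⟨i, hi⟩, fun j hj => hF.source_ne_sink i j (hy _ (Or.inr (Or.inl ⟨j, rfl⟩)) hj).symm⟩
  · rintro ⟨⟨i, hi⟩, hsnk⟩
    refine ⟨D.src i, ⟨⟨i, rfl⟩, isEndPoint_src hF hi hsnk⟩, hi, fun z hz hpz => ?_⟩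
    have hmarked : (∃ i, D.src i = z) ∨ ∃ j, D.snk j = z := by
      rcases hz with hz | hz | ⟨d, hd⟩
      · exact Or.inl hz
      · exact Or.inr hz
      · obtain ⟨i', j, q, -, hi', hj', hqz, -⟩ := (incident_iff hF).1 hd
        exact hF.exists_edge_eq (fun h : p = q => hsnk j (h ▸ hj')) hpz hqz hi hi'
    rcases hmarked with ⟨i', rfl⟩ | ⟨j, rfl⟩
    · rw [hF.source_unique hpz hi]
    · exact absurd hpz (hsnk j)

lemma factors_snk_iff (hF : IsZigzag D.map) (j : D.J) :
    Factors D.map (D.snk j) ↔ D.IsEndPoint (D.snk j) := by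
  have := D.fintypeI
  have := D.fintypeJ
  rw [isEndPoint_snk_iff hF]
  constructor
  · intro h p q i i' hp hq hi hi'
    by_contra hpq
    exact hF.not_factors_sink hpq hp hq hi hi' h
  · exact fun h => hF.factors_sink h

lemma factors_iff_of_unmarked (hF : IsZigzag D.map) {x : B.Vertex} (hs : ∀ i, D.src i ≠ x)
    (ht : ∀ j, D.snk j ≠ x) :
    Factors D.map x ↔ ¬ D.HasVertex x ∧ ¬ ∃ p ∈ x.1, ∃ y : B.Vertex, D.IsDegOneSource y ∧
      p ∈ y.1 ∧ ∀ z : B.Vertex, D.HasVertex z → p ∈ z.1 → z = y := by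
  have := D.fintypeI
  have := D.fintypeJ
  simp only [exists_isDegOneSource_iff hF]
  rw [hF.factors_iff_of_unmarked hs ht, not_hasVertex_iff hF hs ht]
  constructor
  · intro h
    refine ⟨fun p i j hp hi hj => ?_, ?_⟩
    · obtain ⟨j', hj', hl⟩ := h p i hp hi
      rwa [hF.sink_unique hj hj']
    · rintro ⟨p, hp, ⟨i, hi⟩, hsnk⟩
      obtain ⟨j, hj, -⟩ := h p i hp hi
      exact hsnk j hj
  · rintro ⟨h, hcycle⟩ p i hp hi
    obtain ⟨j, hj⟩ : ∃ j, p ∈ (D.snk j).1 := by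
      by_contra! hsnk
      exact hcycle ⟨p, hp, ⟨i, hi⟩, hsnk⟩
    exact ⟨j, hj, h p i j hp hi hj⟩

theorem factors_iff (hF : IsZigzag D.map) (hrange : Superfluous (LinearMap.range D.map))
    (x : B.Vertex) :
    Factors D.map x ↔ D.IsDegOneSink x ∨ (¬ D.HasVertex x ∧
      ¬ ∃ p ∈ x.1, ∃ y : B.Vertex, D.IsDegOneSource y ∧ p ∈ y.1 ∧
        ∀ z : B.Vertex, D.HasVertex z → p ∈ z.1 → z = y) := by
  have := D.fintypeI
  have := D.fintypeJ
  by_cases hs : ∃ i, D.src i = x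
  · obtain ⟨i, rfl⟩ := hs
    refine iff_of_false (not_factors_source hrange i) ?_
    rintro (⟨⟨j, hj⟩, -⟩ | ⟨h, -⟩)
    · exact hF.source_ne_sink i j hj.symm
    · exact h (Or.inl ⟨i, rfl⟩)
  by_cases ht : ∃ j, D.snk j = x
  · obtain ⟨j, rfl⟩ := ht
    have hvertex : D.HasVertex (D.snk j) := Or.inr (Or.inl ⟨j, rfl⟩)
    rw [factors_snk_iff hF, or_iff_left fun h => h.1 hvertex, IsDegOneSink,
      and_iff_right ⟨j, rfl⟩]
  · rw [or_iff_right fun h => ht h.1]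
    exact factors_iff_of_unmarked hF (not_exists.1 hs) (not_exists.1 ht)

end Decomposition

lemma Superfluous.map_equiv {R P Q : Type*} [Ring R] [AddCommGroup P] [Module R P]
    [AddCommGroup Q] [Module R Q] {N : Submodule R P} (hN : Superfluous N) (e : P ≃ₗ[R] Q) :
    Superfluous (N.map e.toLinearMap) := by
  intro L hL
  have h1 : N ⊔ L.comap e.toLinearMap = ⊤ := by
    rw [← Submodule.map_eq_top_iff (e := e), Submodule.map_sup,
      Submodule.map_comap_eq_of_surjective e.surjective, hL]
  rw [← Submodule.map_comap_eq_of_surjective e.surjective L, hN _ h1, Submodule.map_top,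
    LinearEquiv.range]

namespace IsMinimalPresentation

variable {V : Type v} {B : BrauerTree V} {K : Type u} [Field K] {T : B.Cplx K}
  {M : ModuleCat.{max u v} (B.Alg K)}

lemma projective_X (hTM : IsMinimalPresentation T M) (n : ℤ) : Projective (T.X n) := by
  have := hTM.strictlyGE
  have := hTM.strictlyLE
  by_cases h0 : n = 0
  · subst h0
    have := hTM.projective₀
    exact (IsProjective.iff_projective _).1 inferInstance
  by_cases h1 : n = 1
  · subst h1
    have := hTM.projective₁
    exact (IsProjective.iff_projective _).1 inferInstance
  have : IsZero (T.X n) := by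
    rcases lt_or_gt_of_ne h0 with h | h
    · exact T.isZero_of_isStrictlyGE 0 n h
    · exact T.isZero_of_isStrictlyLE 1 n (by lia)
  exact Projective.of_iso this.isoZero.symm inferInstance

lemma homVanishes_one_iff [HasDerivedCategory.{w} (ModuleCat.{max u v} (B.Alg K))]
    (hTM : IsMinimalPresentation T M) (L : B.Cplx K) [L.IsStrictlyLE 1] :
    HomVanishes.{w} T L 1 ↔ ∀ φ : T.X 0 →ₗ[B.Alg K] L.X 1,
      ∃ (a : T.X 0 →ₗ[B.Alg K] L.X 0) (b : T.X 1 →ₗ[B.Alg K] L.X 1),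
        φ = (L.d 0 1).hom ∘ₗ a + b ∘ₗ (T.d 0 1).hom := by
  have := hTM.strictlyGE
  have := hTM.strictlyLE
  have := hTM.projective_X
  have := CochainComplex.isKProjective_of_projective T 1
  rw [HomVanishes, derivedCategory_hom_vanishes_iff, forall_mem_coboundaries_one_iff]
  constructor
  · intro h φ
    obtain ⟨a, b, hab⟩ := h (ModuleCat.ofHom φ)
    refine ⟨a.hom, b.hom, ?_⟩
    rw [← ModuleCat.hom_comp, ← ModuleCat.hom_comp, ← ModuleCat.hom_add, ← hab,
      ModuleCat.hom_ofHom]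
  · intro h φ
    obtain ⟨a, b, hab⟩ := h φ.hom
    refine ⟨ModuleCat.ofHom a, ModuleCat.ofHom b, ?_⟩
    ext1
    simpa using hab

lemma homVanishes_stalk_iff [HasDerivedCategory.{w} (ModuleCat.{max u v} (B.Alg K))]
    (hTM : IsMinimalPresentation T M) {P : B.Cplx K} {x : B.Vertex} (hP : IsStalk P 1 x) :
    HomVanishes.{w} T P 1 ↔ ∀ φ : T.X 0 →ₗ[B.Alg K] B.proj K x,
      ∃ b : T.X 1 →ₗ[B.Alg K] B.proj K x, φ = b ∘ₗ (T.d 0 1).hom := by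
  obtain ⟨i⟩ := hP
  have hz (n : ℤ) (hn : n ≠ 1) : IsZero (P.X n) :=
    (HomologicalComplex.isZero_single_obj_X (ComplexShape.up ℤ) 1 _ n hn).of_iso
      ((HomologicalComplex.eval _ _ n).mapIso i)
  have : P.IsStrictlyLE 1 := by
    rw [CochainComplex.isStrictlyLE_iff]
    intro n hn
    exact hz n (by lia)
  have j : P.X 1 ≃ₗ[B.Alg K] B.proj K x :=
    ((HomologicalComplex.eval _ _ 1).mapIso i ≪≫
      HomologicalComplex.singleObjXSelf (ComplexShape.up ℤ) 1 _).toLinearEquiv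
  have h0 : P.d 0 1 = 0 := (hz 0 (by lia)).eq_of_src _ _
  rw [hTM.homVanishes_one_iff]
  simp only [h0, ModuleCat.hom_zero, LinearMap.zero_comp, zero_add, exists_const]
  constructor
  · intro h φ
    obtain ⟨b, hb⟩ := h (j.symm.toLinearMap ∘ₗ φ)
    refine ⟨j.toLinearMap ∘ₗ b, ?_⟩
    rw [LinearMap.comp_assoc, ← hb]
    ext; simp
  · intro h φ
    obtain ⟨b, hb⟩ := h (j.toLinearMap ∘ₗ φ)
    refine ⟨j.symm.toLinearMap ∘ₗ b, ?_⟩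
    rw [LinearMap.comp_assoc, ← hb]
    ext; simp

lemma homVanishes_stalk_iff_factors [HasDerivedCategory.{w} (ModuleCat.{max u v} (B.Alg K))]
    (hTM : IsMinimalPresentation T M) (D : Decomposition T) {P : B.Cplx K} {x : B.Vertex}
    (hP : IsStalk P 1 x) : HomVanishes.{w} T P 1 ↔ Factors D.map x := by
  rw [hTM.homVanishes_stalk_iff hP, Factors]
  let u : B.ProjSum K (fun _ : Unit => x) ≃ₗ[B.Alg K] B.proj K x :=
    LinearEquiv.funUnique Unit (B.Alg K) (B.proj K x)
  constructor
  · intro h φ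
    obtain ⟨b, hb⟩ := h (u.toLinearMap ∘ₗ φ ∘ₗ D.iso₀.toLinearMap)
    refine ⟨u.symm.toLinearMap ∘ₗ b ∘ₗ D.iso₁.symm.toLinearMap, LinearMap.ext fun y => ?_⟩
    have := LinearMap.congr_fun hb (D.iso₀.symm y)
    simp only [LinearMap.comp_apply, LinearEquiv.coe_coe, LinearEquiv.apply_symm_apply] at this
    simp only [LinearMap.comp_apply, LinearEquiv.coe_coe, Decomposition.map_apply,
      LinearEquiv.symm_apply_apply, ← this]
  · intro h φ
    obtain ⟨b, hb⟩ := h (u.symm.toLinearMap ∘ₗ φ ∘ₗ D.iso₀.symm.toLinearMap)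
    refine ⟨u.toLinearMap ∘ₗ b ∘ₗ D.iso₁.toLinearMap, LinearMap.ext fun y => ?_⟩
    have := LinearMap.congr_fun hb (D.iso₀ y)
    simp only [LinearMap.comp_apply, LinearEquiv.coe_coe, LinearEquiv.symm_apply_apply,
      Decomposition.map_apply] at this
    simp only [LinearMap.comp_apply, LinearEquiv.coe_coe, ← this, LinearEquiv.apply_symm_apply]

lemma isRigid_map [HasDerivedCategory.{w} (ModuleCat.{max u v} (B.Alg K))]
    (hTM : IsMinimalPresentation T M) (D : Decomposition T) (hT : HomVanishes.{w} T T 1) :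
    IsRigid D.map := by
  have := hTM.strictlyLE
  rw [hTM.homVanishes_one_iff] at hT
  intro φ
  obtain ⟨a, b, hab⟩ := hT (D.iso₁.symm.toLinearMap ∘ₗ φ ∘ₗ D.iso₀.toLinearMap)
  refine ⟨D.iso₀.toLinearMap ∘ₗ a ∘ₗ D.iso₀.symm.toLinearMap,
    D.iso₁.toLinearMap ∘ₗ b ∘ₗ D.iso₁.symm.toLinearMap, LinearMap.ext fun y => ?_⟩
  have := congrArg D.iso₁ (LinearMap.congr_fun hab (D.iso₀.symm y))
  simpa [Decomposition.map_apply] using this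

lemma superfluous_range (hTM : IsMinimalPresentation T M) (D : Decomposition T) :
    Superfluous (LinearMap.range D.map) := by
  obtain ⟨p, -, hp, hs⟩ := hTM.exists_cover
  have h : LinearMap.range D.map = (LinearMap.ker p).map D.iso₁.toLinearMap := by
    rw [← hp, Decomposition.map, LinearMap.range_comp, LinearMap.range_comp_of_range_eq_top]
    exact LinearEquiv.range _
  rw [h]
  exact hs.map_equiv D.iso₁

lemma superfluous_ker_map (hTM : IsMinimalPresentation T M) (D : Decomposition T) :
    Superfluous (LinearMap.ker D.map) := by
  have h : LinearMap.ker D.map = (LinearMap.ker (T.d 0 1).hom).map D.iso₀.toLinearMap := by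
    ext y
    simp [Decomposition.map_apply, Submodule.mem_map_equiv]
  rw [h]
  exact hTM.superfluous_ker.map_equiv D.iso₀

lemma nonempty_snk (hTM : IsMinimalPresentation T M) (hM : ¬ IsZero M) (D : Decomposition T) :
    Nonempty D.J := by
  obtain ⟨p, hp, -, -⟩ := hTM.exists_cover
  by_contra hJ
  rw [not_nonempty_iff] at hJ
  have : Subsingleton (T.X 1) := D.iso₁.toEquiv.subsingleton
  have : Subsingleton M := hp.subsingleton
  exact hM (ModuleCat.isZero_of_subsingleton M)

lemma nonempty_src (hTM : IsMinimalPresentation T M) (hM : ¬ Module.Projective (B.Alg K) M)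
    (D : Decomposition T) : Nonempty D.I := by
  obtain ⟨p, hp, hrange, -⟩ := hTM.exists_cover
  by_contra hI
  rw [not_nonempty_iff] at hI
  have : Subsingleton (T.X 0) := D.iso₀.toEquiv.subsingleton
  have hker : LinearMap.ker p = ⊥ := by
    rw [← hrange, LinearMap.range_eq_bot]
    exact LinearMap.ext fun y => by rw [Subsingleton.elim y 0, map_zero, map_zero]
  have := hTM.projective₁
  exact hM (Module.Projective.of_equiv
    (LinearEquiv.ofBijective p ⟨LinearMap.ker_eq_bot.1 hker, hp⟩))

lemma isZigzag [Finite V] [Infinite K] [HasDerivedCategory.{w} (ModuleCat.{max u v} (B.Alg K))]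
    (hTM : IsMinimalPresentation T M) (hT : HomVanishes.{w} T T 1) (hM : Indecomposable M)
    (hMproj : ¬ Module.Projective (B.Alg K) M) (D : Decomposition T) : IsZigzag D.map := by
  have := D.fintypeI
  have := D.fintypeJ
  have := hTM.nonempty_snk hM.1 D
  have := hTM.nonempty_src hMproj D
  obtain ⟨p, hp, hrange, -⟩ := hTM.exists_cover
  refine (hTM.isRigid_map D hT).isZigzag hM (π := p ∘ₗ D.iso₁.symm.toLinearMap)
    (hp.comp D.iso₁.symm.surjective) ?_ (hTM.superfluous_range D) (hTM.superfluous_ker_map D)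
  ext y
  rw [LinearMap.mem_ker, LinearMap.comp_apply, ← LinearMap.mem_ker, ← hrange]
  constructor
  · rintro ⟨z, rfl⟩
    exact ⟨D.iso₀.symm z, by simp [Decomposition.map_apply]⟩
  · rintro ⟨z, hz⟩
    exact ⟨D.iso₀ z, by simp [Decomposition.map_apply, hz]⟩

end IsMinimalPresentation

end BrauerTree

theorem hom_to_shifted_stalk1_vanishes_iff_general {V : Type v} [Finite V] (B : BrauerTree V)
    (K : Type u) [Field K] [Infinite K]
    [HasDerivedCategory.{w} (ModuleCat.{max u v} (B.Alg K))]
    (T : B.Cplx K) (hT : BrauerTree.HomVanishes.{w} T T 1)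
    (M : ModuleCat.{max u v} (B.Alg K)) (hM : Indecomposable M)
    (hMproj : ¬ Module.Projective (B.Alg K) M)
    (hTM : BrauerTree.IsMinimalPresentation T M)
    (D : BrauerTree.Decomposition T)
    (P : B.Cplx K) (x : B.Vertex) (hP : BrauerTree.IsStalk P 1 x) :
    BrauerTree.HomVanishes.{w} T P 1 ↔
      (D.IsDegOneSink x ∨
        (¬ D.HasVertex x ∧
          ¬ ∃ l : List B.Arrow, B.IsACycle K l ∧ B.OnCycle x l ∧
            ∃ y : B.Vertex, D.IsDegOneSource y ∧ B.OnCycle y l ∧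
              ∀ z : B.Vertex, D.HasVertex z → B.OnCycle z l → z = y)) := by
  rw [hTM.homVanishes_stalk_iff_factors D hP,
    BrauerTree.Decomposition.factors_iff (hTM.isZigzag hT hM hMproj D) (hTM.superfluous_range D),
    BrauerTree.exists_isACycle_iff (K := K)
      (P := fun S => ∃ y, D.IsDegOneSource y ∧ S y ∧ ∀ z, D.HasVertex z → S z → z = y)]

theorem hom_to_shifted_stalk1_vanishes_iff {V : Type v} [Finite V] (B : BrauerTree V)
    (K : Type u) [Field K] [IsAlgClosed K]
    [HasDerivedCategory.{w} (ModuleCat.{max u v} (B.Alg K))]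
    (T : B.Cplx K) (hT : BrauerTree.IsIndecPartialTilting.{w} T)
    (M : ModuleCat.{max u v} (B.Alg K)) (hM : Indecomposable M)
    (hMproj : ¬ Module.Projective (B.Alg K) M)
    (hTM : BrauerTree.IsMinimalPresentation T M)
    (D : BrauerTree.Decomposition T)
    (P : B.Cplx K) (x : B.Vertex) (hP : BrauerTree.IsStalk P 1 x) :
    BrauerTree.HomVanishes.{w} T P 1 ↔
      (D.IsDegOneSink x ∨
        (¬ D.HasVertex x ∧
          ¬ ∃ l : List B.Arrow, B.IsACycle K l ∧ B.OnCycle x l ∧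
            ∃ y : B.Vertex, D.IsDegOneSource y ∧ B.OnCycle y l ∧
              ∀ z : B.Vertex, D.HasVertex z → B.OnCycle z l → z = y)) :=
  hom_to_shifted_stalk1_vanishes_iff_general B K T (hT.2 1 one_ne_zero) M hM hMproj hTM D P x
    hP
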